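/- In G = PSU(3,q), q = 2^(2^n), every element of order 2 is contained in exactly q³/2 maximal subgroups of G of order 6(q+1)². -/

import Mathlib

/-!
The proof takes place in the full unitary group `U = U3 K` over the field `K` with `q ^ 2` elements.
As `q ≡ 1` modulo `3`, every scalar of norm one is a cube, so `toPSU : U →* PSU3 n` is onto, and its
kernel is the group of `q + 1` scalars. Subgroups of `PSU3 n` of order `6 * (q + 1) ^ 2` thus
correspond to subgroups of `U` of order `6 * (q + 1) ^ 3` containing the scalars, and maximality is
preserved. As `q + 1` is odd, involutions lift to involutions (`exists_involution`).

Let `Mon K` be the group of monomial unitary matrices, the stabilizer of the standard triangle; its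
order is `6 * (q + 1) ^ 3` (`card_Mon`). Three facts give the theorem.

* Every subgroup `L` of `U` of this order is a conjugate `conjMon u` of `Mon K`
  (`exists_eq_conjMon`). Let `r` be a prime divisor of `q + 1`. The `r`-torsion of the diagonal torus
  has exactly one fixed point on `U / Mon K`, so the index of `Mon K`, hence that of `L`, is prime to
  `r`, and a conjugate of `L` contains that torsion. The homologies in the torsion have odd order, so
  they and their `L`-conjugates lie in a subgroup of odd order (`exists_odd_kernel`). In a group of odd
  order in characteristic two, averaging the projection onto the centre of a homology shows that two
  centres of homologies are equal or orthogonal (`centre_parallel_or_orthogonal`). Therefore the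
  conjugate of `L` permutes the vertices of the standard triangle.

* `Mon K` is maximal (`isCoatom_Mon`). A strict overgroup contains a matrix with a column that is not
  a multiple of a basis vector. From this one obtains a homology whose centre lies on a side of the
  triangle and is not a vertex (`exists_orb_side`); with the torus it generates the unitary group of
  that side (`two_eq_top`, by counting points in orbits on the projective line). The unitary groups of
  the three sides generate a group that is transitive on unit vectors (`mem_Orb`) and contains the
  stabilizer of a basis vector, so the overgroup is `U`.

* An involution of `U` lies in exactly `q ^ 3 / 2` conjugates of `Mon K` (`card_conjMon_mem`). It is a
  transvection `1 + e * e^*` with `e` isotropic (`exists_transvection`). If it permutes the vertices of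
  a triangle, it interchanges two of them, and these are spanned by unit vectors `c` and `c + e`.
  Conversely each `c` with `h(c, c) = h(c, e) = 1` gives the triangle with vertices `c`, `c + e` and
  the pole of their span. There are `q ^ 3` such vectors (`card_unit`), and two of them give the same
  triangle exactly when they are equal or their sum is `e` (`frame_col_of_conjMon_eq`).
-/

open scoped Classical Pointwise

namespace PSUPaper

/-- `q = 2^(2^n)`. -/
abbrev qval (n : ℕ) : ℕ := 2 ^ 2 ^ n

/-- The field with `q² = 2^(2^(n+1))` elements. -/
abbrev Fq2 (n : ℕ) : Type := GaloisField 2 (2 ^ (n + 1))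

/-- The involutory automorphism `x ↦ x^q` of `F_{q²}`, as a star-ring structure. -/
noncomputable instance starRingFq2 (n : ℕ) : StarRing (Fq2 n) where
  star x := x ^ qval n
  star_involutive x := by
    letI : Fintype (Fq2 n) := Fintype.ofFinite _
    show (x ^ qval n) ^ qval n = x
    rw [← pow_mul]
    have h : qval n * qval n = 2 ^ 2 ^ (n + 1) := by
      rw [← pow_add, ← two_mul, pow_succ, mul_comm]
    have hcard : Fintype.card (Fq2 n) = 2 ^ 2 ^ (n + 1) := by
      rw [← Nat.card_eq_fintype_card, GaloisField.card 2 (2 ^ (n + 1)) (by positivity)]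
    rw [h, ← hcard]
    exact FiniteField.pow_card x
  star_mul x y := by
    show (x * y) ^ qval n = y ^ qval n * x ^ qval n
    rw [mul_pow, mul_comm]
  star_add x y := by
    show (x + y) ^ qval n = x ^ qval n + y ^ qval n
    exact add_pow_char_pow x y 2 (2 ^ n)

/-- `SU(3,q)`: the subgroup of the unitary group `{M | M * (M^σ)ᵀ = 1}` (with respect to the
star structure `σ : x ↦ x^q` on `F_{q²}`) consisting of the matrices of determinant 1. -/
noncomputable def SU3 (n : ℕ) : Subgroup (Matrix.unitaryGroup (Fin 3) (Fq2 n)) where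
  carrier := {M | (M : Matrix (Fin 3) (Fin 3) (Fq2 n)).det = 1}
  one_mem' := by simp
  mul_mem' := by
    intro a b ha hb
    simp only [Set.mem_setOf_eq, Matrix.UnitaryGroup.mul_val, Matrix.det_mul] at *
    rw [ha, hb, mul_one]
  inv_mem' := by
    intro a ha
    simp only [Set.mem_setOf_eq, Matrix.UnitaryGroup.inv_val] at *
    rw [Matrix.star_eq_conjTranspose, Matrix.det_conjTranspose, ha, star_one]

/-- `PSU(3,q)`: the quotient of `SU(3,q)` by its center. -/
noncomputable abbrev PSU3 (n : ℕ) : Type := SU3 n ⧸ Subgroup.center (SU3 n)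

/-- `mu` is the Möbius function `H ↦ μ(H, G)` of the subgroup lattice of `G`:
`μ(G,G) = 1` and `∑_{J : H ≤ J ≤ G} μ(J,G) = 0` for `H < G`. -/
def IsSubgroupMobius {G : Type*} [Group G] (mu : Subgroup G → ℤ) : Prop :=
  ∀ H : Subgroup G, (∑ᶠ K ∈ {K : Subgroup G | H ≤ K}, mu K) = if H = ⊤ then 1 else 0

/-- `H` and `K` are conjugate subgroups. -/
def IsConjSub {G : Type*} [Group G] (H K : Subgroup G) : Prop :=
  ∃ g : G, Subgroup.map (MulAut.conj g).toMonoidHom H = K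

/-- The conjugacy classes of subgroups of `G`. -/
abbrev SubClasses (G : Type*) [Group G] : Type _ :=
  Quotient (MulAction.orbitRel (ConjAct G) (Subgroup G))

/-- The conjugacy class of a subgroup. -/
def clsOf {G : Type*} [Group G] (H : Subgroup G) : SubClasses G :=
  Quotient.mk (MulAction.orbitRel (ConjAct G) (Subgroup G)) H

/-- The order on conjugacy classes of subgroups: `[H] ≤ [K]` iff `H` is contained in some
conjugate of `K`. -/
def clsLe {G : Type*} [Group G] (x y : SubClasses G) : Prop :=
  ∃ H K : Subgroup G, clsOf H = x ∧ clsOf K = y ∧ ∃ g : ConjAct G, H ≤ g • K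

/-- `lam` is the Möbius function `[H] ↦ μ([H], [G])` of the poset of conjugacy classes of
subgroups of `G`: `μ([G],[G]) = 1` and `∑_{[J] : [H] ≤ [J] ≤ [G]} μ([J],[G]) = 0` for
`[H] < [G]`. -/
def IsClassMobius {G : Type*} [Group G] (lam : SubClasses G → ℤ) : Prop :=
  ∀ x : SubClasses G, (∑ᶠ y ∈ {y : SubClasses G | clsLe x y}, lam y) =
    if x = clsOf (⊤ : Subgroup G) then 1 else 0

/-- `m` is the Möbius function `H ↦ μ_{L_p}({1}, H)` of the poset `L_p` of `p`-subgroups of `G`: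
`μ_{L_p}({1},{1}) = 1` and `∑_{J ∈ L_p : J ≤ K} μ_{L_p}({1},J) = 0` for `{1} < K ∈ L_p`. -/
def IsPMobiusBot {G : Type*} [Group G] (p : ℕ) (m : Subgroup G → ℤ) : Prop :=
  m ⊥ = 1 ∧ ∀ K : Subgroup G, IsPGroup p K → ⊥ < K →
    (∑ᶠ J ∈ {J : Subgroup G | IsPGroup p J ∧ J ≤ K}, m J) = 0

set_option linter.unusedSectionVars false
set_option linter.style.haveILetI false

/-! ### Norm and trace on a finite field with an involution -/

/-- The field `K` has characteristic 2 and `q²` elements, its star operation is `x ↦ x^q`, and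
`q ≥ 4` is an even number congruent to 1 modulo 3. -/
structure HermField (K : Type*) [Field K] [StarRing K] [CharP K 2] (q : ℕ) : Prop where
  card : Nat.card K = q ^ 2
  star_eq : ∀ x : K, star x = x ^ q
  four_le : 4 ≤ q
  even : q % 2 = 0
  mod_three : q % 3 = 1

section Field

variable {K : Type*} [Field K] [StarRing K] [CharP K 2] [Finite K] {q : ℕ}

namespace HermField

theorem norm_eq_pow (h : HermField K q) (x : K) : x * star x = x ^ (q + 1) := by
  rw [h.star_eq, pow_succ']

theorem star_fixed_iff (h : HermField K q) {x : K} (hx : x ≠ 0) :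
    star x = x ↔ x ^ (q - 1) = 1 := by
  have h4 := h.four_le
  rw [h.star_eq]
  constructor
  · intro hh
    apply mul_left_cancel₀ hx
    rw [← pow_succ', mul_one, show q - 1 + 1 = q by omega, hh]
  · intro hh
    conv_lhs => rw [show q = q - 1 + 1 by omega, pow_succ, hh, one_mul]

theorem card_units (h : HermField K q) : Nat.card Kˣ = (q + 1) * (q - 1) := by
  have h4 := h.four_le
  letI := Fintype.ofFinite K
  rw [Nat.card_units, h.card, ← Nat.sq_sub_sq, one_pow]

theorem card_ker_norm (h : HermField K q) :
    Nat.card (powMonoidHom (q + 1) : Kˣ →* Kˣ).ker = q + 1 := by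
  rw [IsCyclic.card_powMonoidHom_ker, h.card_units, Nat.gcd_eq_right (Dvd.intro _ rfl)]

theorem range_norm (h : HermField K q) :
    (powMonoidHom (q + 1) : Kˣ →* Kˣ).range = (powMonoidHom (q - 1) : Kˣ →* Kˣ).ker := by
  have h4 := h.four_le
  apply Subgroup.eq_of_le_of_card_ge
  · rintro _ ⟨x, rfl⟩
    rw [MonoidHom.mem_ker]
    simp only [powMonoidHom_apply]
    rw [← pow_mul, ← h.card_units, pow_card_eq_one']
  · rw [IsCyclic.card_powMonoidHom_ker, IsCyclic.card_powMonoidHom_range, h.card_units,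
      Nat.gcd_eq_right (Dvd.intro _ rfl), Nat.gcd_eq_right (Dvd.intro_left _ rfl),
      Nat.mul_div_cancel_left _ (by omega)]

theorem exists_norm (h : HermField K q) {c : K} (hc : star c = c) :
    ∃ x : K, x * star x = c := by
  have h4 := h.four_le
  rcases eq_or_ne c 0 with rfl | h0
  · exact ⟨0, by simp⟩
  have hm : Units.mk0 c h0 ∈ (powMonoidHom (q - 1) : Kˣ →* Kˣ).ker := by
    rw [MonoidHom.mem_ker]
    ext
    simpa using (h.star_fixed_iff h0).1 hc
  rw [← h.range_norm] at hm
  obtain ⟨x, hx⟩ := hm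
  refine ⟨x, ?_⟩
  rw [h.norm_eq_pow]
  simpa using congrArg Units.val hx

theorem card_norm_one (h : HermField K q) : Nat.card {x : K // x * star x = 1} = q + 1 := by
  have h4 := h.four_le
  rw [← h.card_ker_norm]
  symm
  refine Nat.card_congr
    { toFun := fun u => ⟨(u.1 : K), ?_⟩
      invFun := fun x => ⟨Units.mk0 x.1 ?_, ?_⟩
      left_inv := ?_
      right_inv := ?_ }
  · have := congrArg Units.val (MonoidHom.mem_ker.1 u.2)
    rw [h.norm_eq_pow]
    simpa using this
  · intro h0
    have := x.2
    rw [h0, zero_mul] at this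
    exact zero_ne_one this
  · rw [MonoidHom.mem_ker]
    ext
    simpa [h.norm_eq_pow] using x.2
  · intro u
    ext
    rfl
  · intro x
    rfl

theorem card_norm_eq (h : HermField K q) {c : K} (hc : star c = c) (h0 : c ≠ 0) :
    Nat.card {x : K // x * star x = c} = q + 1 := by
  obtain ⟨t, ht⟩ := h.exists_norm hc
  have ht0 : t ≠ 0 := by
    rintro rfl
    exact h0 (by simpa using ht.symm)
  have hs0 : star t ≠ 0 := by simpa using ht0
  rw [← h.card_norm_one]
  refine Nat.card_congr
    { toFun := fun u => ⟨u.1 / t, ?_⟩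
      invFun := fun x => ⟨x.1 * t, ?_⟩
      left_inv := fun u => by ext; simp [ht0]
      right_inv := fun u => by ext; simp [ht0] }
  · have := u.2
    rw [star_div₀]
    field_simp
    rw [this, ← ht]
  · have := x.2
    rw [star_mul, ← ht]
    linear_combination (t * star t) * this

theorem card_fixed (h : HermField K q) : Nat.card {x : K // star x = x} = q := by
  have h4 := h.four_le
  have e : {x : K // star x = x} ≃ Option (powMonoidHom (q - 1) : Kˣ →* Kˣ).ker := by
    refine
    { toFun := fun u => if h0 : u.1 = 0 then none else some ⟨Units.mk0 u.1 h0, ?_⟩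
      invFun := fun x => x.elim ⟨0, star_zero K⟩ (fun y => ⟨y.1, ?_⟩)
      left_inv := ?_
      right_inv := ?_ }
    · rw [MonoidHom.mem_ker]
      ext
      simpa using (h.star_fixed_iff h0).1 u.2
    · have := congrArg Units.val (MonoidHom.mem_ker.1 y.2)
      rw [h.star_fixed_iff y.1.ne_zero]
      simpa using this
    · intro u
      by_cases h0 : u.1 = 0
      · simp only [h0, dite_true, Option.elim]
        exact Subtype.ext h0.symm
      · simp only [h0, dite_false, Option.elim]
        rfl
    · intro x
      cases x with
      | none => simp
      | some y => simp
  rw [Nat.card_congr e, Finite.card_option, IsCyclic.card_powMonoidHom_ker, h.card_units,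
    Nat.gcd_eq_right (Dvd.intro_left _ rfl)]
  omega

theorem exists_trace_one (h : HermField K q) : ∃ k : K, k + star k = 1 := by
  have h4 := h.four_le
  have : ∃ x : K, star x ≠ x := by
    by_contra hh
    push Not at hh
    have h1 := h.card_fixed
    rw [Nat.card_congr (Equiv.subtypeUnivEquiv hh), h.card] at h1
    nlinarith
  obtain ⟨x, hx⟩ := this
  have ht : x + star x ≠ 0 := by
    intro h0
    exact hx (by grind)
  refine ⟨x / (x + star x), ?_⟩
  rw [star_div₀, star_add, star_star, add_comm (star x) x, ← add_div, div_self ht]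

/-- Elements of norm 1 of prescribed prime order exist for the prime divisors of `q + 1`. -/
theorem exists_order (h : HermField K q) {r : ℕ} (hr : r.Prime) (hd : r ∣ q + 1) :
    ∃ l : K, l ^ r = 1 ∧ l ≠ 1 ∧ l * star l = 1 := by
  haveI := Fact.mk hr
  obtain ⟨u, hu⟩ := exists_prime_orderOf_dvd_card' (G := Kˣ) r
    (by rw [h.card_units]; exact Dvd.dvd.mul_right hd _)
  have h1 : u ^ r = 1 := by rw [← hu, pow_orderOf_eq_one]
  refine ⟨u, ?_, ?_, ?_⟩
  · simpa using congrArg Units.val h1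
  · intro h2
    have : u = 1 := by ext; exact h2
    rw [this, orderOf_one] at hu
    exact hr.one_lt.ne hu
  · obtain ⟨k, hk⟩ := hd
    rw [h.norm_eq_pow, hk, pow_mul]
    have := congrArg Units.val h1
    simp only [Units.val_pow_eq_pow_val, Units.val_one] at this
    rw [this, one_pow]

end HermField

end Field

/-! ### Subgroups of the two-dimensional unitary group -/

section Two

open Matrix

variable {K : Type*} [Field K] [StarRing K] [CharP K 2] [Finite K] {q : ℕ}

theorem card_unit_two (h : HermField K q) :
    Nat.card {p : K × K // p.1 * star p.1 + p.2 * star p.2 = 1} = (q + 1) * (q ^ 2 - q) := by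
  letI := Fintype.ofFinite K
  have h4 := h.four_le
  have e : {p : K × K // p.1 * star p.1 + p.2 * star p.2 = 1} ≃
      Σ a : K, {b : K // b * star b = 1 + a * star a} :=
    { toFun := fun p => ⟨p.1.1, p.1.2, by have := p.2; grind⟩
      invFun := fun s => ⟨(s.1, s.2.1), by have := s.2.2; grind⟩
      left_inv := fun _ => rfl
      right_inv := fun _ => rfl }
  rw [Nat.card_congr e, Nat.card_sigma]
  have hN : ∀ a : K, Nat.card {b : K // b * star b = 1 + a * star a}
      + (if a * star a = 1 then q else 0) = q + 1 := by
    intro a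
    split_ifs with ha
    · rw [ha, CharTwo.add_self_eq_zero]
      have : Nat.card {b : K // b * star b = 0} = 1 := by
        rw [Nat.card_eq_one_iff_unique]
        refine ⟨⟨fun x y => ?_⟩, ⟨⟨0, by simp⟩⟩⟩
        have hx := x.2
        have hy := y.2
        simp only [mul_eq_zero, star_eq_zero, or_self] at hx hy
        exact Subtype.ext (hx.trans hy.symm)
      rw [this, add_comm]
    · rw [add_zero]
      apply h.card_norm_eq
      · simp [mul_comm]
      · intro h0
        exact ha (by grind)
  have hs : ∑ a : K, (Nat.card {b : K // b * star b = 1 + a * star a}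
      + (if a * star a = 1 then q else 0)) = q ^ 2 * (q + 1) := by
    rw [Finset.sum_congr rfl (fun a _ => hN a), Finset.sum_const, Finset.card_univ,
      ← Nat.card_eq_fintype_card, h.card, smul_eq_mul]
  rw [Finset.sum_add_distrib, ← Finset.sum_filter, Finset.sum_const, smul_eq_mul] at hs
  have hc : (Finset.univ.filter (fun a : K => a * star a = 1)).card = q + 1 := by
    rw [← h.card_norm_one, Nat.card_eq_fintype_card, Fintype.card_subtype]
  rw [hc] at hs
  have h5 : (q + 1) * (q ^ 2 - q) + (q + 1) * q = q ^ 2 * (q + 1) := by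
    rw [← mul_add, Nat.sub_add_cancel (by nlinarith), mul_comm]
  omega

/-- The unitary 2×2 matrix with first column `(a, b)` and determinant 1 (signs are immaterial
in characteristic 2). -/
def mk2 (a b : K) (hab : a * star a + b * star b = 1) : unitaryGroup (Fin 2) K :=
  ⟨!![a, star b; b, star a], by
    rw [mem_unitaryGroup_iff']
    ext i j
    fin_cases i <;> fin_cases j <;> simp [Matrix.mul_apply, star_apply] <;> grind⟩

/-- The diagonal unitary 2×2 matrix with diagonal `(a, b)`. -/
def dg2 (a b : K) (ha : a * star a = 1) (hb : b * star b = 1) : unitaryGroup (Fin 2) K :=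
  ⟨!![a, 0; 0, b], by
    rw [mem_unitaryGroup_iff]
    ext i j
    fin_cases i <;> fin_cases j <;> simp [Matrix.mul_apply, star_apply, ha, hb]⟩

theorem unitary_two (g : unitaryGroup (Fin 2) K) :
    (g 0 0 * star (g 0 0) + g 1 0 * star (g 1 0) = 1 ∧
      star (g 0 1) * g 0 0 + star (g 1 1) * g 1 0 = 0) ∧
    (g 0 0 * star (g 0 0) + g 0 1 * star (g 0 1) = 1 ∧
      g 1 0 * star (g 0 0) + g 1 1 * star (g 0 1) = 0 ∧
      g 1 0 * star (g 1 0) + g 1 1 * star (g 1 1) = 1) := by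
  have h1 := mem_unitaryGroup_iff'.1 g.2
  have h2 := mem_unitaryGroup_iff.1 g.2
  have e := fun i j => congrFun (congrFun h1 i) j
  have f := fun i j => congrFun (congrFun h2 i) j
  simp only [Matrix.mul_apply, star_apply, Fin.sum_univ_two] at e f
  refine ⟨⟨?_, ?_⟩, ?_, ?_, ?_⟩
  · simpa [mul_comm] using e 0 0
  · simpa using e 1 0
  · simpa using f 0 0
  · simpa using f 1 0
  · simpa using f 1 1

/-- A point `P` of the projective line is moved by the homologies with centre `v` onto points
whose coordinates have at least `q / 2` different norms. With the torus this gives more than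
half of all unit vectors. -/
theorem card_orbit_two (h : HermField K q) (x y : K) (hx : x ≠ 0) (hy : y ≠ 0)
    (hxy : x * star x + y * star y = 1) (O : Set (K × K))
    (hO : ∀ t a b : K, t * star t = 1 → a * star a = 1 → b * star b = 1 →
      (a * (1 + (t + 1) * (x * star x)), b * ((t + 1) * (star x * y))) ∈ O) :
    q * (q + 1) ^ 2 ≤ 2 * O.ncard := by
  letI := Fintype.ofFinite K
  have h4 := h.four_le
  let N1 : Finset K := Finset.univ.filter (fun a : K => a * star a = 1)
  have hN1 : N1.card = q + 1 := by
    rw [← h.card_norm_one, Nat.card_eq_fintype_card, Fintype.card_subtype]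
  have hmem : ∀ a, a ∈ N1 ↔ a * star a = 1 := by simp [N1]
  let X : Finset (K × K × K) := (N1.erase 1) ×ˢ N1 ×ˢ N1
  have hX : X.card = q * (q + 1) ^ 2 := by
    have h1 : (1 : K) ∈ N1 := by simp [hmem]
    simp only [X, Finset.card_product, Finset.card_erase_of_mem h1, hN1]
    rw [Nat.add_sub_cancel]
    ring
  let f : K × K × K → K × K := fun p =>
    (p.2.1 * (1 + (p.1 + 1) * (x * star x)), p.2.2 * ((p.1 + 1) * (star x * y)))
  have hsub : (X.image f : Set (K × K)) ⊆ O := by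
    intro z hz
    simp only [Finset.coe_image, Set.mem_image, Finset.mem_coe] at hz
    obtain ⟨p, hp, rfl⟩ := hz
    simp only [X, Finset.mem_product, Finset.mem_erase, hmem] at hp
    exact hO _ _ _ hp.1.2 hp.2.1 hp.2.2
  have hle : (X.image f).card ≤ O.ncard := by
    rw [← Set.ncard_coe_finset]
    exact Set.ncard_le_ncard hsub (Set.toFinite _)
  rw [← hX]
  refine (Finset.card_le_mul_card_image X 2 ?_).trans (Nat.mul_le_mul_left 2 hle)
  intro z hz
  obtain ⟨p₀, hp₀, rfl⟩ := Finset.mem_image.1 hz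
  have hsx : star x ≠ 0 := by simpa using hx
  have hsy : star y ≠ 0 := by simpa using hy
  have key : ∀ p ∈ X, f p = f p₀ → p.1 = p₀.1 ∨ p.1 = star p₀.1 := by
    intro p hp he
    simp only [X, Finset.mem_product, Finset.mem_erase, hmem] at hp hp₀
    have e2 : p.2.2 * ((p.1 + 1) * (star x * y)) = p₀.2.2 * ((p₀.1 + 1) * (star x * y)) :=
      congrArg Prod.snd he
    have e3 : p.2.2 * (p.1 + 1) = p₀.2.2 * (p₀.1 + 1) := by
      apply mul_right_cancel₀ (mul_ne_zero hsx hy)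
      linear_combination e2
    have e4 := congrArg star e3
    simp only [star_mul, star_add, star_one] at e4
    obtain ⟨⟨-, a1⟩, a2, a3⟩ := hp
    obtain ⟨⟨-, b1⟩, b2, b3⟩ := hp₀
    generalize p.1 = t at *
    generalize p₀.1 = s at *
    generalize p.2.2 = m at *
    generalize p₀.2.2 = n at *
    have e5 : (t + 1) * (star t + 1) = (s + 1) * (star s + 1) := by
      linear_combination (star t + 1) * (-(t + 1)) * a3 + (s + 1) * (star s + 1) * b3
        + (star t + 1) * star m * e3 + n * (s + 1) * e4
    have e6 : (t + s) * (t + star s) = 0 := by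
      have : t + star t = s + star s := by grind
      have h2 : star t = t + s + star s := by grind
      rw [h2] at a1
      linear_combination a1 + b1 + (CharTwo.two_eq_zero (R := K))
    rcases mul_eq_zero.1 e6 with h1 | h1
    · left
      exact CharTwo.add_eq_zero.1 h1
    · right
      exact CharTwo.add_eq_zero.1 h1
  have hnz : ∀ t : K, t * star t = 1 → t ≠ 1 → 1 + (t + 1) * (x * star x) ≠ 0 := by
    intro t ht ht1 h0
    have h1 := congrArg star h0
    simp only [star_add, star_one, star_mul, star_star, star_zero] at h1
    have h2 : (t + star t) * (x * star x) = 0 := by grind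
    have h3 : t + star t = 0 := by
      rcases mul_eq_zero.1 h2 with h3 | h3
      · exact h3
      · exact absurd h3 (mul_ne_zero hx hsx)
    have h4 : (t + 1) * (t + 1) = 0 := by grind
    have h5 := mul_self_eq_zero.1 h4
    exact ht1 (CharTwo.add_eq_zero.1 h5)
  have hinj : Set.InjOn (fun p : K × K × K => p.1)
      (X.filter (fun p => f p = f p₀) : Set (K × K × K)) := by
    intro p hp p' hp' he
    simp only [Finset.coe_filter, Set.mem_ofPred_eq] at hp hp'
    have e := hp.2.trans hp'.2.symm
    have hpX := hp.1
    have hpX' := hp'.1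
    simp only [X, Finset.mem_product, Finset.mem_erase, hmem] at hpX hpX'
    obtain ⟨t, a, b⟩ := p
    obtain ⟨t', a', b'⟩ := p'
    simp only at he
    subst he
    simp only [f, Prod.mk.injEq] at e
    have n1 := hnz t hpX.1.2 hpX.1.1
    have n2 : t + 1 ≠ 0 := fun h0 => hpX.1.1 (CharTwo.add_eq_zero.1 h0)
    have e1 := mul_right_cancel₀ n1 e.1
    have e2 := mul_right_cancel₀ (mul_ne_zero n2 (mul_ne_zero hsx hy)) e.2
    rw [e1, e2]
  have hmaps : ∀ p ∈ X.filter (fun p => f p = f p₀), p.1 ∈ ({p₀.1, star p₀.1} : Finset K) := by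
    intro p hp
    rw [Finset.mem_filter] at hp
    simpa using key p hp.1 hp.2
  exact (Finset.card_le_card_of_injOn _ hmaps hinj).trans Finset.card_le_two

/-- A subgroup of the two-dimensional unitary group that contains the diagonal torus and a
non-monomial element is the whole group: the orbit of the first basis vector contains more than
half of the unit vectors, so it meets each of its translates. -/
theorem two_eq_top (h : HermField K q) (A : Subgroup (unitaryGroup (Fin 2) K))
    (hd : ∀ a b ha hb, dg2 (K := K) a b ha hb ∈ A) (g : unitaryGroup (Fin 2) K) (hg : g ∈ A)
    (h00 : g 0 0 ≠ 0) (h10 : g 1 0 ≠ 0) : A = ⊤ := by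
  have h4 := h.four_le
  have one1 : (1 : K) * star 1 = 1 := by simp
  let O : Set (K × K) := {p | ∃ u ∈ A, p = (u 0 0, u 1 0)}
  let Om : Set (K × K) := {p | p.1 * star p.1 + p.2 * star p.2 = 1}
  have hOm : Om.ncard = (q + 1) * (q ^ 2 - q) := by
    rw [← card_unit_two h]
    rfl
  have hOO : O ⊆ Om := by
    rintro _ ⟨u, -, rfl⟩
    exact (unitary_two u).1.1
  have hcard : q * (q + 1) ^ 2 ≤ 2 * O.ncard := by
    apply card_orbit_two h (g 0 0) (g 1 0) h00 h10 (unitary_two g).1.1 O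
    intro t a b ht ha hb
    refine ⟨dg2 a b ha hb * (g * dg2 t 1 ht one1 * g⁻¹),
      A.mul_mem (hd _ _ _ _) (A.mul_mem (A.mul_mem hg (hd _ _ _ _)) (A.inv_mem hg)), ?_⟩
    have hu := (unitary_two g).2
    simp only [UnitaryGroup.mul_apply, Matrix.mul_apply, Fin.sum_univ_two, dg2,
      UnitaryGroup.inv_apply, star_apply, Matrix.of_apply, Matrix.cons_val', Matrix.cons_val_zero,
      Matrix.cons_val_one, Matrix.cons_val_fin_one]
    refine Prod.ext ?_ ?_
    · simp only
      grind
    · simp only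
      grind
  refine (Subgroup.eq_top_iff' A).2 fun u => ?_
  let F : K × K → K × K := fun p => (u 0 0 * p.1 + u 0 1 * p.2, u 1 0 * p.1 + u 1 1 * p.2)
  have hF : ∀ w : unitaryGroup (Fin 2) K, F (w 0 0, w 1 0) = ((u * w) 0 0, (u * w) 1 0) := by
    intro w
    simp [F, Matrix.mul_apply, Fin.sum_univ_two]
  have hFinj : Function.Injective F := by
    have hu1 := mem_unitaryGroup_iff'.1 u.2
    have e := fun i j => congrFun (congrFun hu1 i) j
    simp only [Matrix.mul_apply, star_apply, Fin.sum_univ_two] at e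
    have e00 := e 0 0
    have e01 := e 0 1
    have e10 := e 1 0
    have e11 := e 1 1
    simp only [one_apply_eq, ne_eq, zero_ne_one, one_ne_zero, not_false_eq_true,
      one_apply_ne] at e00 e01 e10 e11
    intro p p' hpp
    simp only [F, Prod.mk.injEq] at hpp
    obtain ⟨h1, h2⟩ := hpp
    refine Prod.ext ?_ ?_
    · linear_combination (p'.1 - p.1) * e00 + (p'.2 - p.2) * e01 + star (u.1 0 0) * h1
        + star (u.1 1 0) * h2
    · linear_combination (p'.1 - p.1) * e10 + (p'.2 - p.2) * e11 + star (u.1 0 1) * h1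
        + star (u.1 1 1) * h2
  have hFO : F '' O ⊆ Om := by
    rintro _ ⟨_, ⟨w, -, rfl⟩, rfl⟩
    rw [hF]
    exact (unitary_two (u * w)).1.1
  have hmeet : (F '' O ∩ O).Nonempty := by
    by_contra hem
    rw [Set.not_nonempty_iff_eq_empty] at hem
    have h1 : (F '' O ∪ O).ncard = (F '' O).ncard + O.ncard :=
      Set.ncard_union_eq (Set.disjoint_iff_inter_eq_empty.2 hem) (Set.toFinite _) (Set.toFinite _)
    have h2 : (F '' O ∪ O).ncard ≤ Om.ncard :=
      Set.ncard_le_ncard (Set.union_subset hFO hOO) (Set.toFinite Om)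
    rw [Set.ncard_image_of_injective O hFinj] at h1
    rw [hOm, h1] at h2
    have h3 : q ^ 2 - q ≤ q * q := by rw [pow_two]; exact Nat.sub_le _ _
    have h5 := Nat.mul_le_mul_left (q + 1) h3
    nlinarith
  obtain ⟨_, ⟨_, ⟨w, hw, rfl⟩, rfl⟩, ⟨w', hw', he⟩⟩ := hmeet
  rw [hF] at he
  have he0 := congrArg Prod.fst he
  have he1 := congrArg Prod.snd he
  simp only at he0 he1
  have hcol : ∀ i, (u * w) i 0 = w' i 0 := by
    intro i
    fin_cases i
    · exact he0
    · exact he1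
  -- `w'⁻¹ * u * w` fixes the first basis vector, so it is diagonal.
  have hv0 : ∀ i, (w'⁻¹ * (u * w)) i 0 = (1 : Matrix (Fin 2) (Fin 2) K) i 0 := by
    intro i
    have h1 := mem_unitaryGroup_iff'.1 w'.2
    have h2 := congrFun (congrFun h1 i) 0
    rw [UnitaryGroup.mul_apply, Matrix.mul_apply]
    rw [Matrix.mul_apply] at h2
    rw [← h2]
    exact Finset.sum_congr rfl fun j _ => by rw [hcol j]; rfl
  set v := w'⁻¹ * (u * w) with hv
  have hv00 : v 0 0 = 1 := by simpa using hv0 0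
  have hv10 : v 1 0 = 0 := by simpa using hv0 1
  have hun := unitary_two v
  have hv01 : v 0 1 = 0 := by
    have := hun.1.2
    rw [hv00, hv10] at this
    simpa using this
  have hv11 : v 1 1 * star (v 1 1) = 1 := by
    have := hun.2.2.2
    rw [hv10] at this
    simpa using this
  have hvA : v ∈ A := by
    have : v = dg2 1 (v 1 1) one1 hv11 := by
      ext i j
      fin_cases i <;> fin_cases j <;> simp [dg2, hv00, hv10, hv01]
    rw [this]
    exact hd _ _ _ _
  have : u = w' * v * w⁻¹ := by rw [hv]; group
  rw [this]
  exact A.mul_mem (A.mul_mem hw' hvA) (A.inv_mem hw)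

end Two

/-! ### Monomial unitary matrices -/

section Mono

open Matrix

variable {K : Type*} [Field K] [StarRing K] [CharP K 2] [Finite K] {q : ℕ}

/-- The three-dimensional unitary group. -/
abbrev U3 (K : Type*) [Field K] [StarRing K] : Type _ := unitaryGroup (Fin 3) K

theorem col_inner (u : U3 K) (k l : Fin 3) :
    ∑ i, star (u i k) * u i l = if k = l then 1 else 0 := by
  have h := congrFun (congrFun (mem_unitaryGroup_iff'.1 u.2) k) l
  rw [Matrix.mul_apply, Matrix.one_apply] at h
  simpa [star_apply] using h

theorem row_inner (u : U3 K) (k l : Fin 3) :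
    ∑ i, u k i * star (u l i) = if k = l then 1 else 0 := by
  have h := congrFun (congrFun (mem_unitaryGroup_iff.1 u.2) k) l
  rw [Matrix.mul_apply, Matrix.one_apply] at h
  simpa [star_apply] using h

theorem inv_entry (u : U3 K) (i j : Fin 3) : u⁻¹ i j = star (u j i) := by
  rw [UnitaryGroup.inv_apply, star_apply]

theorem mul_entry (u v : U3 K) (i j : Fin 3) :
    (u * v) i j = u i 0 * v 0 j + u i 1 * v 1 j + u i 2 * v 2 j := by
  rw [UnitaryGroup.mul_apply, Matrix.mul_apply, Fin.sum_univ_three]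

/-- The diagonal unitary matrix with diagonal `d`. -/
def dg (d : Fin 3 → K) (hd : ∀ i, d i * star (d i) = 1) : U3 K :=
  ⟨diagonal d, by
    rw [mem_unitaryGroup_iff, star_eq_conjTranspose, diagonal_conjTranspose, diagonal_mul_diagonal,
      ← diagonal_one]
    congr 1
    funext i
    exact hd i⟩

theorem dg_entry (d : Fin 3 → K) (hd) (i j : Fin 3) :
    dg d hd i j = if i = j then d i else 0 := by
  simp [dg, diagonal_apply]

variable (K) in
/-- The group of monomial unitary matrices: no column has two nonzero entries. It is the
stabilizer of the standard self-polar triangle. -/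
def Mon : Subgroup (U3 K) where
  carrier := {u | ∀ i j k, i ≠ j → u i k * u j k = 0}
  one_mem' := by
    intro i j k hij
    simp only [UnitaryGroup.one_apply, Matrix.one_apply]
    split_ifs <;> grind
  mul_mem' := by
    intro u v hu hv i j k hij
    have h0 := hu i j 0 hij
    have h1 := hu i j 1 hij
    have h2 := hu i j 2 hij
    have g1 := hv 0 1 k (by decide)
    have g2 := hv 0 2 k (by decide)
    have g3 := hv 1 2 k (by decide)
    rw [mul_entry, mul_entry]
    linear_combination (v 0 k) ^ 2 * h0 + (v 1 k) ^ 2 * h1 + (v 2 k) ^ 2 * h2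
      + (u i 0 * u j 1 + u i 1 * u j 0) * g1 + (u i 0 * u j 2 + u i 2 * u j 0) * g2
      + (u i 1 * u j 2 + u i 2 * u j 1) * g3
  inv_mem' := by
    intro u hu i j k hij
    rw [inv_entry, inv_entry, ← star_mul, star_eq_zero]
    by_contra hne
    have h1 : u k j ≠ 0 := left_ne_zero_of_mul hne
    have h2 : u k i ≠ 0 := right_ne_zero_of_mul hne
    have h3 := col_inner u i j
    rw [if_neg hij, Finset.sum_eq_single k] at h3
    · rcases mul_eq_zero.1 h3 with h | h
      · exact h2 (star_eq_zero.1 h)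
      · exact h1 h
    · intro b _ hb
      rcases mul_eq_zero.1 (hu b k j hb) with h | h
      · rw [h, mul_zero]
      · exact absurd h h1
    · simp

theorem mem_Mon {u : U3 K} : u ∈ Mon K ↔ ∀ i j k, i ≠ j → u i k * u j k = 0 := Iff.rfl

/-- The monomial matrix with permutation `p` and nonzero entries `d`. -/
def monMk (p : Equiv.Perm (Fin 3)) (d : Fin 3 → K) (hd : ∀ i, d i * star (d i) = 1) : U3 K :=
  ⟨Matrix.of fun i k => if i = p k then d k else 0, by
    rw [mem_unitaryGroup_iff']
    ext k l
    rw [Matrix.mul_apply, Matrix.one_apply]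
    simp only [star_apply, of_apply]
    split_ifs with hkl
    · subst hkl
      simp [apply_ite star, mul_comm, hd]
    · simp [apply_ite star, Ne.symm hkl]⟩

theorem monMk_entry (p : Equiv.Perm (Fin 3)) (d : Fin 3 → K) (hd) (i k : Fin 3) :
    monMk p d hd i k = if i = p k then d k else 0 := rfl

theorem monMk_mem (p : Equiv.Perm (Fin 3)) (d : Fin 3 → K) (hd) : monMk p d hd ∈ Mon K := by
  intro i j k hij
  rw [monMk_entry, monMk_entry]
  split_ifs <;> grind

theorem dg_mem_Mon (d : Fin 3 → K) (hd) : dg d hd ∈ Mon K := by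
  intro i j k hij
  rw [dg_entry, dg_entry]
  split_ifs <;> grind

theorem mon_exists {u : U3 K} (hu : u ∈ Mon K) : ∃ p d hd, u = monMk p d hd := by
  have h1 : ∀ k, ∃ i, u i k ≠ 0 := by
    intro k
    by_contra hh
    push Not at hh
    have := col_inner u k k
    simp [hh] at this
  choose f hf using h1
  have hz : ∀ i k, i ≠ f k → u i k = 0 := by
    intro i k hik
    rcases mul_eq_zero.1 (hu i (f k) k hik) with h | h
    · exact h
    · exact absurd h (hf k)
  have hinj : Function.Injective f := by
    intro k l hkl
    by_contra hne
    have h3 := col_inner u k l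
    rw [if_neg hne, Finset.sum_eq_single (f k)] at h3
    · rcases mul_eq_zero.1 h3 with h | h
      · exact hf k (star_eq_zero.1 h)
      · rw [hkl] at h
        exact hf l h
    · intro b _ hb
      rw [hz b k hb, star_zero, zero_mul]
    · simp
  have hd : ∀ k, u (f k) k * star (u (f k) k) = 1 := by
    intro k
    have h3 := col_inner u k k
    rw [if_pos rfl, Finset.sum_eq_single (f k)] at h3
    · rw [mul_comm]
      exact h3
    · intro b _ hb
      rw [hz b k hb, mul_zero]
    · simp
  refine ⟨Equiv.ofBijective f (Finite.injective_iff_bijective.1 hinj), fun k => u (f k) k, hd, ?_⟩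
  ext i k
  rw [monMk_entry]
  simp only [Equiv.ofBijective_apply]
  split_ifs with h
  · rw [h]
  · exact hz i k h

theorem card_Mon (h : HermField K q) : Nat.card (Mon K) = 6 * (q + 1) ^ 3 := by
  have e : Nat.card (Equiv.Perm (Fin 3) × (Fin 3 → {x : K // x * star x = 1}))
      = Nat.card (Mon K) := by
    refine Nat.card_eq_of_bijective
      (fun s => ⟨monMk s.1 (fun i => (s.2 i).1) fun i => (s.2 i).2, monMk_mem _ _ _⟩) ⟨?_, ?_⟩
    · rintro ⟨p, d⟩ ⟨p', d'⟩ he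
      have he' : ∀ i k, (if i = p k then (d k).1 else 0) = if i = p' k then (d' k).1 else 0 := by
        intro i k
        have h1 := congrArg (fun u : Mon K => u.1 i k) he
        exact h1
      have hne : ∀ k, (d k).1 ≠ 0 := by
        intro k h0
        have := (d k).2
        simp [h0] at this
      have hp : p = p' := by
        ext k
        have h1 := he' (p k) k
        rw [if_pos rfl] at h1
        split_ifs at h1 with h2
        · rw [h2]
        · exact absurd h1 (hne k)
      subst hp
      refine Prod.ext rfl ?_
      funext k
      have h1 := he' (p k) k
      rw [if_pos rfl, if_pos rfl] at h1
      exact Subtype.ext h1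
    · rintro ⟨u, hu⟩
      obtain ⟨p, d, hd, rfl⟩ := mon_exists hu
      exact ⟨(p, fun i => ⟨d i, hd i⟩), rfl⟩
  rw [← e, Nat.card_prod, Nat.card_fun, h.card_norm_one]
  simp [Fintype.card_perm, Nat.factorial]

theorem mon_pow_six {m : U3 K} (hm : m ∈ Mon K) (i k : Fin 3) (hik : i ≠ k) :
    (m ^ 6) i k = 0 := by
  obtain ⟨p, d, hd, rfl⟩ := mon_exists hm
  have key : ∀ (n : ℕ) (i : Fin 3), i ≠ (p ^ n) k → (monMk p d hd ^ n) i k = 0 := by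
    intro n
    induction n with
    | zero => 
      intro i hi
      simp only [pow_zero, Equiv.Perm.coe_one, id_eq] at hi
      rw [pow_zero, UnitaryGroup.one_apply, Matrix.one_apply, if_neg hi]
    | succ n ih =>
      intro i hi
      rw [pow_succ', UnitaryGroup.mul_apply, Matrix.mul_apply]
      apply Finset.sum_eq_zero
      intro j _
      by_cases hj : j = (p ^ n) k
      · have : monMk p d hd i j = 0 := by
          rw [monMk_entry, if_neg]
          rintro rfl
          apply hi
          rw [pow_succ', hj]
          rfl
        rw [this, zero_mul]
      · rw [ih j hj, mul_zero]
  apply key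
  have hp : p ^ 6 = 1 := by
    have := pow_card_eq_one' (x := p)
    rwa [Nat.card_perm, Nat.card_fin] at this
  rw [hp]
  exact hik

/-- If a diagonal matrix whose sixth power has distinct entries is conjugated into the monomial
group by `u`, then `u` is monomial. -/
theorem mem_Mon_of_conj {d : Fin 3 → K} (hd) (hdist : ∀ i j, i ≠ j → d i ^ 6 ≠ d j ^ 6) {u : U3 K}
    (hu : u⁻¹ * dg d hd * u ∈ Mon K) : u ∈ Mon K := by
  intro i j k hij
  by_contra hne
  set m := u⁻¹ * dg d hd * u with hm
  have h1 : dg d hd ^ 6 * u = u * m ^ 6 := by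
    have : m ^ 6 = u⁻¹ * (dg d hd) ^ 6 * u := by
      have := conj_pow (i := 6) (a := u⁻¹) (b := dg d hd)
      rw [inv_inv] at this
      exact this
    rw [this]
    group
  have hpow : ∀ n : ℕ, ((dg d hd ^ n : U3 K) : Matrix (Fin 3) (Fin 3) K)
      = diagonal (fun i => d i ^ n) := by
    intro n
    rw [SubmonoidClass.coe_pow]
    show (diagonal d) ^ n = _
    rw [diagonal_pow]
    rfl
  have h2 : ∀ i, d i ^ 6 * u i k = u i k * (m ^ 6) k k := by
    intro i
    have h3 := congrArg (fun v : U3 K => v i k) h1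
    simp only [UnitaryGroup.mul_apply, hpow] at h3
    rw [diagonal_mul, Matrix.mul_apply, Finset.sum_eq_single k] at h3
    · exact h3
    · intro b _ hb
      rw [mon_pow_six hu b k hb, mul_zero]
    · simp
  have hi := h2 i
  have hj := h2 j
  rw [mul_comm] at hi hj
  have hi' := mul_left_cancel₀ (left_ne_zero_of_mul hne) hi
  have hj' := mul_left_cancel₀ (right_ne_zero_of_mul hne) hj
  exact hdist i j hij (hi'.trans hj'.symm)

/-- A prime divisor of `q + 1` is at least `5`, so an element of that order supplies a diagonal
matrix whose sixth power still has distinct entries. -/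
theorem exists_regular (h : HermField K q) {r : ℕ} (hr : r.Prime) (hdvd : r ∣ q + 1) :
    ∃ d : Fin 3 → K, ∃ _ : ∀ i, d i * star (d i) = 1, (∀ i, d i ^ r = 1) ∧
      ∀ i j, i ≠ j → d i ^ 6 ≠ d j ^ 6 := by
  obtain ⟨l, hl, hl1, hls⟩ := h.exists_order hr hdvd
  have h2 : r ≠ 2 := by
    rintro rfl
    have := h.even
    omega
  have h3 : r ≠ 3 := by
    rintro rfl
    have := h.mod_three
    omega
  have hord : orderOf l = r := by
    haveI := Fact.mk hr
    exact orderOf_eq_prime hl hl1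
  have hndvd : ∀ n : ℕ, n = 6 ∨ n = 12 → l ^ n ≠ 1 := by
    intro n hn h1
    have hd := orderOf_dvd_of_pow_eq_one h1
    rw [hord] at hd
    have : r ∣ 12 := by
      rcases hn with rfl | rfl
      · exact hd.trans (by norm_num)
      · exact hd
    rw [show 12 = 2 * 2 * 3 by norm_num, hr.dvd_mul, hr.dvd_mul,
      Nat.prime_dvd_prime_iff_eq hr Nat.prime_two,
      Nat.prime_dvd_prime_iff_eq hr Nat.prime_three] at this
    omega
  have h6 := hndvd 6 (Or.inl rfl)
  have h12 := hndvd 12 (Or.inr rfl)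
  have hl0 : l ≠ 0 := by
    rintro rfl
    simp at hls
  refine ⟨![1, l, l ^ 2], ?_, ?_, ?_⟩
  · intro i
    fin_cases i
    · simp
    · simpa using hls
    · simp only [Fin.reduceFinMk, cons_val, star_pow]
      rw [← mul_pow, hls, one_pow]
  · intro i
    fin_cases i
    · simp
    · simpa using hl
    · simp only [Fin.reduceFinMk, cons_val]
      rw [← pow_mul, mul_comm, pow_mul, hl, one_pow]
  · have h18 : l ^ 6 ≠ (l ^ 2) ^ 6 := by
      intro h0
      apply h6
      have : l ^ 6 * l ^ 6 = l ^ 6 * 1 := by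
        rw [mul_one]
        linear_combination -h0
      exact mul_left_cancel₀ (pow_ne_zero 6 hl0) this
    have h12' : (l ^ 2) ^ 6 ≠ 1 := by
      rw [← pow_mul]
      exact h12
    intro i j hij
    fin_cases i <;> fin_cases j <;> simp at hij ⊢
    · exact Ne.symm h6
    · exact Ne.symm h12'
    · exact h6
    · exact h18
    · exact h12'
    · exact Ne.symm h18

theorem exists_prime (h : HermField K q) : ∃ r : ℕ, r.Prime ∧ r ∣ q + 1 :=
  Nat.exists_prime_and_dvd (by have := h.four_le; omega)

theorem Mon_self_normalizing (h : HermField K q) {u : U3 K}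
    (hu : ∀ m ∈ Mon K, u⁻¹ * m * u ∈ Mon K) : u ∈ Mon K := by
  obtain ⟨r, hr, hrd⟩ := exists_prime h
  obtain ⟨d, hd, -, hdist⟩ := exists_regular h hr hrd
  exact mem_Mon_of_conj hd hdist (hu _ (dg_mem_Mon d hd))

/-- Conjugating the diagonal homologies by `u` yields the homologies whose centres are the
columns of `u`. -/
theorem homology_entry (u : U3 K) (k : Fin 3) (t : K) (hd) (i j : Fin 3) :
    (u * dg (Function.update 1 k t) hd * u⁻¹) i j
      = (if i = j then 1 else 0) + (t + 1) * (u i k * star (u j k)) := by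
  rw [UnitaryGroup.mul_apply, Matrix.mul_apply]
  have h1 : ∀ l, (u * dg (Function.update 1 k t) hd) i l * u⁻¹ l j
      = u i l * star (u j l) + if l = k then (t + 1) * (u i k * star (u j k)) else 0 := by
    intro l
    rw [inv_entry, UnitaryGroup.mul_apply]
    simp only [dg]
    rw [mul_diagonal]
    by_cases hl : l = k
    · subst hl
      simp only [Function.update_self, if_pos]
      linear_combination -(u i l * star (u j l)) * CharTwo.two_eq_zero (R := K)
    · rw [Function.update_of_ne hl, if_neg hl]
      simp
  rw [Finset.sum_congr rfl fun l _ => h1 l, Finset.sum_add_distrib, row_inner]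
  simp

theorem update_norm (k : Fin 3) {t : K} (ht : t * star t = 1) (i : Fin 3) :
    (Function.update 1 k t : Fin 3 → K) i * star ((Function.update 1 k t : Fin 3 → K) i) = 1 := by
  by_cases hi : i = k
  · subst hi
    simpa using ht
  · simp [Function.update_of_ne hi]

end Mono

/-! ### Subgroups of the same order as the monomial group -/

section SameOrder

open Matrix

/-- A group of order `2 * m` with `m` odd has a subgroup of odd order containing all elements of
odd order: the kernel of the transfer to a Sylow subgroup of order two (Burnside). -/
theorem exists_odd_kernel {G : Type*} [Group G] [Finite G] {m : ℕ} (hm : Odd m)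
    (hG : Nat.card G = 2 * m) :
    ∃ N : Subgroup G, Odd (Nat.card N) ∧ ∀ g : G, Odd (orderOf g) → g ∈ N := by
  have hmf : (Nat.card G).minFac = 2 := by
    rw [hG, Nat.minFac_eq_two_iff]
    exact Dvd.intro _ rfl
  have hm2 : ¬ 2 ∣ m := by
    rw [← even_iff_two_dvd]
    exact Nat.not_even_iff_odd.2 hm
  have hm0 : m ≠ 0 := by
    rintro rfl
    simp at hm
  let P : Sylow 2 G := default
  have hP : Nat.card P = 2 := by
    rw [P.card_eq_multiplicity, hG, Nat.factorization_mul two_ne_zero hm0]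
    simp [Nat.factorization_eq_zero_of_not_dvd hm2, Nat.prime_two.factorization_self]
  haveI : Fact (Nat.Prime 2) := ⟨Nat.prime_two⟩
  have hcyc : IsCyclic P := isCyclic_of_prime_card hP
  set φ := MonoidHom.transferSylow P (hcyc.normalizer_le_centralizer hmf)
  have hc : φ.ker.IsComplement' P := hcyc.isComplement' hmf
  refine ⟨φ.ker, ?_, ?_⟩
  · have h1 := hc.card_mul_card
    rw [hG] at h1
    have h2 : Nat.card (P : Subgroup G) = 2 := hP
    rw [h2] at h1
    have : Nat.card φ.ker = m := by omega
    rw [this]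
    exact hm
  · intro g hg
    rw [MonoidHom.mem_ker]
    have h1 : orderOf (φ g) ∣ orderOf g := orderOf_map_dvd φ g
    have h2 : orderOf (φ g) ∣ 2 := by
      have := orderOf_dvd_natCard (φ g)
      rwa [hP] at this
    have h3 : orderOf (φ g) ∣ 1 := by
      have hco : Nat.Coprime (orderOf g) 2 := Nat.coprime_two_right.2 hg
      rw [← hco]
      exact Nat.dvd_gcd h1 h2
    exact orderOf_eq_one_iff.1 (Nat.dvd_one.1 h3)

variable {K : Type*} [Field K] [StarRing K] [CharP K 2] [Finite K] {q : ℕ}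

theorem natCast_odd {m : ℕ} (hm : Odd m) : (m : K) = 1 := by
  obtain ⟨k, rfl⟩ := hm
  push_cast
  rw [CharTwo.two_eq_zero, zero_mul, zero_add]

/-- The rank one projection onto the line spanned by the `k`-th column of `u`. -/
def proj (u : U3 K) (k : Fin 3) : Matrix (Fin 3) (Fin 3) K :=
  vecMulVec (fun i => u i k) (fun i => star (u i k))

theorem proj_apply (u : U3 K) (k i j : Fin 3) : proj u k i j = u i k * star (u j k) := rfl

theorem proj_mul (g u : U3 K) (k : Fin 3) :
    proj (g * u) k = (g : Matrix (Fin 3) (Fin 3) K) * proj u k * star (g : Matrix _ _ K) := by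
  have h1 : proj u k = (u : Matrix (Fin 3) (Fin 3) K) * Matrix.single k k 1 * star (u : Matrix _ _ K) := by
    ext i j
    rw [proj_apply, Matrix.mul_apply, Finset.sum_eq_single k]
    · simp [star_apply]
    · intro b _ hb
      simp [Matrix.mul_single_apply_of_ne, hb]
    · simp
  have h2 : proj (g * u) k = ((g * u : U3 K) : Matrix (Fin 3) (Fin 3) K) * Matrix.single k k 1
      * star ((g * u : U3 K) : Matrix _ _ K) := by
    ext i j
    rw [proj_apply, Matrix.mul_apply, Finset.sum_eq_single k]
    · simp [star_apply]
    · intro b _ hb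
      simp [Matrix.mul_single_apply_of_ne, hb]
    · simp
  rw [h1, h2, UnitaryGroup.mul_val, star_mul]
  simp only [Matrix.mul_assoc]

theorem trace_proj (u : U3 K) (k : Fin 3) : (proj u k).trace = 1 := by
  have h := col_inner u k k
  rw [if_pos rfl] at h
  rw [proj, trace_vecMulVec, ← h]
  exact Finset.sum_congr rfl fun i _ => mul_comm _ _

theorem homology_eq (u : U3 K) (k : Fin 3) (t : K) (hd) :
    ((u * dg (Function.update 1 k t) hd * u⁻¹ : U3 K) : Matrix (Fin 3) (Fin 3) K)
      = 1 + (t + 1) • proj u k := by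
  ext i j
  have := homology_entry u k t hd i j
  rw [this, Matrix.add_apply, Matrix.smul_apply, proj_apply, Matrix.one_apply, smul_eq_mul]

/-- If two homologies lie in a group of odd order, then their centres are equal or orthogonal.
Otherwise average the projection onto the first centre over the elements of the group acting
trivially modulo the plane spanned by the centres: the result is hermitian, commutes with both
homologies, so has both centres as eigenvectors for the same eigenvalue, and therefore trace `0`;
but its trace is the (odd) number of summands. -/
theorem centre_parallel_or_orthogonal (N : Subgroup (U3 K)) (hN : Odd (Nat.card N)) (u : U3 K)
    (k j : Fin 3) (t : K) (ht : t ≠ 1) (hd hd')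
    (hA : u * dg (Function.update 1 k t) hd * u⁻¹ ∈ N)
    (hB : dg (Function.update 1 j t) hd' ∈ N) (k0 : Fin 3) (hk0 : k0 ≠ j) :
    u j k = 0 ∨ u k0 k = 0 := by
  by_contra hcon
  push Not at hcon
  obtain ⟨hvj, hvk⟩ := hcon
  have ht1 : t + 1 ≠ 0 := fun h0 => ht (CharTwo.add_eq_zero.1 h0)
  let v : Fin 3 → K := fun i => u i k
  let w : Fin 3 → K := Pi.single j 1
  let W : Submodule K (Fin 3 → K) := Submodule.span K {v, w}
  have hvW : v ∈ W := Submodule.subset_span (by simp)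
  have hwW : w ∈ W := Submodule.subset_span (by simp)
  -- The elements of `N` acting trivially on the quotient by the plane `W`. Both homologies are
  -- among them.
  let D : Subgroup (U3 K) :=
    { carrier := {g | g ∈ N ∧ ∀ x, (g : Matrix (Fin 3) (Fin 3) K) *ᵥ x - x ∈ W}
      one_mem' := ⟨N.one_mem, fun x => by simp⟩
      mul_mem' := by
        rintro a b ⟨ha, ha'⟩ ⟨hb, hb'⟩
        refine ⟨N.mul_mem ha hb, fun x => ?_⟩
        have := W.add_mem (ha' ((b : Matrix (Fin 3) (Fin 3) K) *ᵥ x)) (hb' x)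
        rw [sub_add_sub_cancel, mulVec_mulVec] at this
        exact this
      inv_mem' := by
        rintro a ⟨ha, ha'⟩
        refine ⟨N.inv_mem ha, fun x => ?_⟩
        have h1 := ha' (((a⁻¹ : U3 K) : Matrix (Fin 3) (Fin 3) K) *ᵥ x)
        rw [mulVec_mulVec, ← UnitaryGroup.mul_val, mul_inv_cancel, UnitaryGroup.one_val,
          one_mulVec] at h1
        rw [← neg_sub]
        exact W.neg_mem h1 }
  letI : Fintype D := Fintype.ofFinite D
  have hDodd : Odd (Nat.card D) := by
    have h1 : D ≤ N := fun g hg => hg.1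
    exact Odd.of_dvd_nat hN (Subgroup.card_dvd_of_le h1)
  -- The average of the projection onto the first centre; no division is needed, the order of `D`
  -- being odd.
  let Y : Matrix (Fin 3) (Fin 3) K := ∑ g : D, proj (g.1 * u) k
  have hYapp : ∀ a b, Y a b = ∑ g : D, proj (g.1 * u) k a b := fun a b =>
    Matrix.sum_apply a b _ _
  have htr : Y.trace = 1 := by
    rw [Matrix.trace_sum, Finset.sum_congr rfl fun g _ => trace_proj _ _, Finset.sum_const,
      Finset.card_univ, ← Nat.card_eq_fintype_card, nsmul_eq_mul, mul_one, natCast_odd hDodd]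
  have hherm : ∀ a b, Y a b = star (Y b a) := by
    intro a b
    rw [hYapp, hYapp, star_sum]
    refine Finset.sum_congr rfl fun g _ => ?_
    rw [proj_apply, proj_apply, star_mul, star_star]
  have hcol : ∀ l, ∃ a b : K, ∀ i, Y i l = a * v i + b * w i := by
    intro l
    have : (fun i => Y i l) ∈ W := by
      have h1 : (fun i => Y i l) = ∑ g : D, star ((g.1 * u) l k) • fun i => (g.1 * u) i k := by
        funext i
        rw [hYapp, Finset.sum_apply]
        exact Finset.sum_congr rfl fun g _ => by rw [proj_apply, Pi.smul_apply, smul_eq_mul, mul_comm]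
      rw [h1]
      refine W.sum_mem fun g _ => W.smul_mem _ ?_
      have h2 := W.add_mem (g.2.2 v) hvW
      rw [sub_add_cancel] at h2
      exact h2
    obtain ⟨a, b, hab⟩ := Submodule.mem_span_pair.1 this
    refine ⟨a, b, fun i => ?_⟩
    have := congrFun hab i
    simpa using this.symm
  have hcomm : ∀ g ∈ D, (g : Matrix (Fin 3) (Fin 3) K) * Y = Y * (g : Matrix (Fin 3) (Fin 3) K) := by
    intro g hg
    have h1 : (g : Matrix (Fin 3) (Fin 3) K) * Y * star (g : Matrix (Fin 3) (Fin 3) K) = Y := by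
      rw [Finset.mul_sum, Finset.sum_mul]
      refine Fintype.sum_equiv (Equiv.mulLeft (⟨g, hg⟩ : D)) _ _ fun x => ?_
      rw [← proj_mul, ← mul_assoc]
      rfl
    have h2 := mem_unitaryGroup_iff'.1 g.2
    calc (g : Matrix (Fin 3) (Fin 3) K) * Y
        = (g : Matrix (Fin 3) (Fin 3) K) * Y * (star (g : Matrix (Fin 3) (Fin 3) K) * g) := by
          rw [h2, Matrix.mul_one]
      _ = Y * (g : Matrix (Fin 3) (Fin 3) K) := by
          rw [← Matrix.mul_assoc, h1]
  have hprojcomm : ∀ (x : U3 K) (l : Fin 3) (hx), (fun i => x i l) ∈ W →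
      x * dg (Function.update 1 l t) hx * x⁻¹ ∈ N → proj x l * Y = Y * proj x l := by
    intro x l hx hxW hxN
    have h1 : x * dg (Function.update 1 l t) hx * x⁻¹ ∈ D := by
      refine ⟨hxN, fun z => ?_⟩
      rw [homology_eq, add_mulVec, one_mulVec, add_sub_cancel_left, smul_mulVec, proj,
        vecMulVec_mulVec, op_smul_eq_smul]
      exact W.smul_mem _ (W.smul_mem _ hxW)
    have h2 := hcomm _ h1
    rw [homology_eq, Matrix.add_mul, Matrix.mul_add, Matrix.one_mul, Matrix.mul_one, add_right_inj,
      Matrix.smul_mul, Matrix.mul_smul] at h2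
    exact smul_right_injective _ ht1 h2
  have hE := hprojcomm u k hd hvW hA
  have hE' : proj (1 : U3 K) j * Y = Y * proj 1 j := by
    apply hprojcomm 1 j hd'
    · convert hwW using 1
      funext i
      rw [UnitaryGroup.one_apply, Matrix.one_apply]
      simp [w, Pi.single_apply]
    · simpa using hB
  -- `Y` maps the second centre to a multiple of itself.
  have hYj : ∀ i, i ≠ j → Y i j = 0 := by
    intro i hi
    have h1 := congrFun (congrFun hE' i) j
    simp only [Matrix.mul_apply, proj_apply, UnitaryGroup.one_apply, Matrix.one_apply, hi] at h1
    simpa using h1.symm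
  -- `Y` also maps the first centre to a multiple of itself.
  have hYv : ∃ α, ∀ i, ∑ l, Y i l * v l = α * v i := by
    refine ⟨∑ a, star (v a) * ∑ l, Y a l * v l, fun i => ?_⟩
    have h1 := congrArg (fun M => M *ᵥ v) hE
    simp only [← mulVec_mulVec] at h1
    have h2 : proj u k *ᵥ v = v := by
      rw [proj, vecMulVec_mulVec]
      have h3 : (fun i => star (u i k)) ⬝ᵥ v = 1 := by
        have := col_inner u k k
        rw [if_pos rfl] at this
        exact this
      rw [h3]
      simp [v]
    rw [h2, proj, vecMulVec_mulVec] at h1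
    have h3 := congrFun h1 i
    simp only [Pi.smul_apply, MulOpposite.smul_eq_mul_unop, MulOpposite.unop_op] at h3
    have h4 : (Y *ᵥ v) i = ∑ l, Y i l * v l := rfl
    rw [← h4, ← h3, mul_comm]
    rfl
  obtain ⟨α, hα⟩ := hYv
  -- The two eigenvalues agree, since `Y` is hermitian and the centres are not orthogonal.
  have hαj : α = Y j j := by
    have h1 := hα j
    rw [Finset.sum_eq_single j] at h1
    · exact (mul_right_cancel₀ hvj h1).symm
    · intro b _ hb
      rw [hherm, hYj b hb, star_zero, zero_mul]
    · simp
  choose a b hab using hcol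
  have hwj : w j = 1 := by simp [w]
  have hw0 : ∀ i, i ≠ j → w i = 0 := fun i hi => by simp [w, hi]
  have haj : a j = 0 := by
    have h1 := hab j k0
    rw [hYj k0 hk0, hw0 k0 hk0, mul_zero, add_zero] at h1
    exact (mul_eq_zero.1 h1.symm).resolve_right hvk
  have hbj : Y j j = b j := by
    rw [hab j j, haj, hwj, zero_mul, zero_add, mul_one]
  have hsum : ∑ l, a l * v l = α := by
    apply mul_right_cancel₀ hvk
    rw [← hα k0, Finset.sum_mul]
    refine Finset.sum_congr rfl fun l _ => ?_
    rw [hab l k0, hw0 k0 hk0]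
    ring
  -- On the plane `W` containing its image, `Y` is multiplication by `α`, so its trace is `α + α`.
  have h0 : Y.trace = 0 := by
    have h1 : Y.trace = ∑ l, (a l * v l + b l * w l) := Finset.sum_congr rfl fun l _ => hab l l
    rw [h1, Finset.sum_add_distrib, hsum, Finset.sum_eq_single j, hwj, mul_one, ← hbj, ← hαj,
      CharTwo.add_self_eq_zero]
    · intro b _ hb
      rw [hw0 b hb, mul_zero]
    · simp
  rw [htr] at h0
  exact one_ne_zero h0

end SameOrder

section Conj

open Matrix

variable {K : Type*} [Field K] [StarRing K] [CharP K 2] [Finite K] {q : ℕ}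

/-- The conjugate `u * Mon * u⁻¹` of the monomial group. -/
def conjMon (u : U3 K) : Subgroup (U3 K) := (Mon K).map (MulAut.conj u).toMonoidHom

theorem mem_conjMon {u x : U3 K} : x ∈ conjMon u ↔ u⁻¹ * x * u ∈ Mon K := by
  rw [conjMon, Subgroup.mem_map]
  constructor
  · rintro ⟨m, hm, rfl⟩
    simpa [mul_assoc] using hm
  · intro hx
    exact ⟨_, hx, by simp [mul_assoc]⟩

theorem card_conjMon (u : U3 K) : Nat.card (conjMon u) = Nat.card (Mon K) :=
  Subgroup.card_map_of_injective (MulAut.conj u).injective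

variable (K) in
/-- The diagonal unitary matrices whose `r`-th power is `1`. -/
def torusTorsion (r : ℕ) : Subgroup (U3 K) where
  carrier := {u | ∃ d hd, (∀ i, d i ^ r = 1) ∧ u = dg d hd}
  one_mem' := by
    refine ⟨1, by simp, by simp, ?_⟩
    ext i j
    rw [dg_entry, UnitaryGroup.one_apply, Matrix.one_apply]
    rfl
  mul_mem' := by
    rintro _ _ ⟨d, hd, h, rfl⟩ ⟨d', hd', h', rfl⟩
    refine ⟨d * d', fun i => ?_, fun i => ?_, ?_⟩
    · rw [Pi.mul_apply, star_mul, mul_assoc, ← mul_assoc (d' i), hd', one_mul, hd]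
    · rw [Pi.mul_apply, mul_pow, h, h', one_mul]
    · apply Subtype.ext
      exact diagonal_mul_diagonal d d'
  inv_mem' := by
    rintro _ ⟨d, hd, h, rfl⟩
    refine ⟨star d, fun i => ?_, fun i => ?_, ?_⟩
    · rw [Pi.star_apply, star_star, mul_comm, hd]
    · rw [Pi.star_apply, ← star_pow, h, star_one]
    · ext i j
      rw [inv_entry, dg_entry, dg_entry]
      by_cases hij : i = j
      · subst hij
        simp
      · simp [hij, Ne.symm hij]

theorem dg_pow (d : Fin 3 → K) (hd) (r : ℕ) (h : ∀ i, d i ^ r = 1) : dg d hd ^ r = 1 := by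
  apply Subtype.ext
  rw [SubmonoidClass.coe_pow]
  show (diagonal d) ^ r = 1
  rw [diagonal_pow, ← diagonal_one]
  congr 1
  funext i
  exact h i

theorem isPGroup_torusTorsion (r : ℕ) : IsPGroup r (torusTorsion K r) := by
  rintro ⟨_, d, hd, h, rfl⟩
  exact ⟨1, Subtype.ext (by rw [pow_one]; exact dg_pow d hd r h)⟩

/-- For a prime `r` dividing `q + 1`, the `r`-torsion of the torus has a unique fixed point on the
cosets of the monomial group, hence also a fixed point on the cosets of any subgroup of the same
order. -/
theorem exists_conj_torusTorsion (h : HermField K q) {r : ℕ} (hr : r.Prime) (hrd : r ∣ q + 1)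
    (L : Subgroup (U3 K)) (hL : Nat.card L = Nat.card (Mon K)) :
    ∃ u : U3 K, ∀ x ∈ torusTorsion K r, u⁻¹ * x * u ∈ L := by
  haveI := Fact.mk hr
  obtain ⟨d, hd, hdr, hdist⟩ := exists_regular h hr hrd
  have hfix : Nat.card (MulAction.fixedPoints (torusTorsion K r) (U3 K ⧸ Mon K)) = 1 := by
    rw [Nat.card_eq_one_iff_unique]
    constructor
    · have key : ∀ z ∈ MulAction.fixedPoints (torusTorsion K r) (U3 K ⧸ Mon K),
          z = ((1 : U3 K) : U3 K ⧸ Mon K) := by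
        intro z hz
        induction z using QuotientGroup.induction_on with
        | H u =>
          have h1 := hz ⟨dg d hd, d, hd, hdr, rfl⟩
          have h2 : ((dg d hd * u : U3 K) : U3 K ⧸ Mon K) = (u : U3 K ⧸ Mon K) := h1
          rw [eq_comm, QuotientGroup.eq, ← mul_assoc] at h2
          rw [eq_comm, QuotientGroup.eq, inv_one, one_mul]
          exact mem_Mon_of_conj hd hdist h2
      exact ⟨fun a b => Subtype.ext ((key _ a.2).trans (key _ b.2).symm)⟩
    · refine ⟨⟨((1 : U3 K) : U3 K ⧸ Mon K), ?_⟩⟩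
      rintro ⟨_, d', hd', h', rfl⟩
      show ((dg d' hd' * 1 : U3 K) : U3 K ⧸ Mon K) = ((1 : U3 K) : U3 K ⧸ Mon K)
      rw [eq_comm, QuotientGroup.eq, inv_one, one_mul, mul_one]
      exact dg_mem_Mon _ _
  have hmod := (isPGroup_torusTorsion (K := K) r).card_modEq_card_fixedPoints (U3 K ⧸ Mon K)
  rw [hfix] at hmod
  have hidx : Nat.card (U3 K ⧸ L) = Nat.card (U3 K ⧸ Mon K) := by
    have h1 := Subgroup.card_eq_card_quotient_mul_card_subgroup L
    rw [Subgroup.card_eq_card_quotient_mul_card_subgroup (Mon K), hL] at h1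
    exact (Nat.eq_of_mul_eq_mul_right Nat.card_pos h1).symm
  have hnd : ¬ r ∣ Nat.card (U3 K ⧸ L) := by
    rw [hidx]
    intro h0
    have h1 : 0 ≡ 1 [MOD r] := ((Nat.modEq_zero_iff_dvd.2 h0).symm).trans hmod
    rw [Nat.ModEq, Nat.zero_mod, Nat.mod_eq_of_lt hr.one_lt] at h1
    exact zero_ne_one h1
  obtain ⟨z, hz⟩ := (isPGroup_torusTorsion (K := K) r).nonempty_fixed_point_of_prime_not_dvd_card
    (U3 K ⧸ L) hnd
  induction z using QuotientGroup.induction_on with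
  | H u =>
    refine ⟨u, fun x hx => ?_⟩
    have h1 := hz ⟨x, hx⟩
    have h2 : ((x * u : U3 K) : U3 K ⧸ L) = (u : U3 K ⧸ L) := h1
    rw [eq_comm, QuotientGroup.eq, ← mul_assoc] at h2
    exact h2

/-- Subgroups of the order of the monomial group are its conjugates. -/
theorem exists_eq_conjMon (h : HermField K q) (L : Subgroup (U3 K))
    (hL : Nat.card L = Nat.card (Mon K)) : ∃ u : U3 K, L = conjMon u := by
  obtain ⟨r, hr, hrd⟩ := exists_prime h
  obtain ⟨u, hu⟩ := exists_conj_torusTorsion h hr hrd L hL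
  obtain ⟨t, htr, ht1, ht⟩ := h.exists_order hr hrd
  let L' : Subgroup (U3 K) := L.map (MulAut.conj u).toMonoidHom
  have hmem : ∀ x, x ∈ L' ↔ u⁻¹ * x * u ∈ L := by
    intro x
    rw [Subgroup.mem_map]
    constructor
    · rintro ⟨m, hm, rfl⟩
      simpa [mul_assoc] using hm
    · intro hx
      exact ⟨_, hx, by simp [mul_assoc]⟩
  have hL' : Nat.card L' = 6 * (q + 1) ^ 3 := by
    rw [← card_Mon h, ← hL]
    exact Subgroup.card_map_of_injective (MulAut.conj u).injective
  have hq := h.even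
  have hodd : Odd (q + 1) := by
    rw [Nat.odd_iff]
    omega
  obtain ⟨N, hN, hNmem⟩ := exists_odd_kernel (G := L') (m := 3 * (q + 1) ^ 3)
    (Odd.mul (by decide) hodd.pow) (by rw [hL']; ring)
  have hN' : Odd (Nat.card (N.map L'.subtype)) := by
    rw [Subgroup.card_map_of_injective L'.subtype_injective]
    exact hN
  have hrodd : Odd r := Odd.of_dvd_nat hodd hrd
  have htorus : ∀ k, dg (Function.update 1 k t) (update_norm k ht) ∈ torusTorsion K r := by
    intro k
    refine ⟨_, _, fun i => ?_, rfl⟩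
    by_cases hi : i = k
    · subst hi
      simpa using htr
    · simp [Function.update_of_ne hi]
  have hhom : ∀ g ∈ L', ∀ k,
      g * dg (Function.update 1 k t) (update_norm k ht) * g⁻¹ ∈ N.map L'.subtype := by
    intro g hg k
    have hdL : dg (Function.update 1 k t) (update_norm k ht) ∈ L' :=
      (hmem _).2 (hu _ (htorus k))
    have hgL := L'.mul_mem (L'.mul_mem hg hdL) (L'.inv_mem hg)
    refine ⟨⟨_, hgL⟩, hNmem _ ?_, rfl⟩
    refine Odd.of_dvd_nat hrodd (orderOf_dvd_of_pow_eq_one ?_)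
    apply Subtype.ext
    rw [SubmonoidClass.coe_pow, conj_pow]
    obtain ⟨d, hd, hdr, he⟩ := htorus k
    rw [he, dg_pow d hd r hdr, mul_one, mul_inv_cancel]
    rfl
  -- The centres of these homologies are the vertices of the standard triangle and their images
  -- under `L'`.
  have hle : L' ≤ Mon K := by
    intro g hg i j k hij
    have hB := hhom 1 L'.one_mem j
    rw [one_mul, inv_one, mul_one] at hB
    rcases centre_parallel_or_orthogonal _ hN' g k j t ht1 _ _ (hhom g hg k) hB i hij with h0 | h0
    · rw [h0, mul_zero]
    · rw [h0, zero_mul]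
  have heq : L' = Mon K := Subgroup.eq_of_le_of_card_ge hle (by rw [hL', card_Mon h])
  refine ⟨u⁻¹, ?_⟩
  ext x
  rw [mem_conjMon, ← heq, hmem]
  simp [mul_assoc]

end Conj

/-! ### Maximality of the monomial group -/

section Maximal

open Matrix

variable {K : Type*} [Field K] [StarRing K] [CharP K 2] [Finite K] {q : ℕ}

theorem blk_unitary (a b d e c : K) (h00 : a * star a + b * star b = 1)
    (h01 : a * star d + b * star e = 0) (h10 : d * star a + e * star b = 0)
    (h11 : d * star d + e * star e = 1) (hc : c * star c = 1) :
    !![a, b, 0; d, e, 0; 0, 0, c] ∈ unitaryGroup (Fin 3) K := by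
  rw [mem_unitaryGroup_iff]
  ext i j
  rw [Matrix.mul_apply, Fin.sum_univ_three]
  simp only [star_apply]
  fin_cases i <;> fin_cases j <;> simp [h00, h01, h10, h11, hc]

/-- The block diagonal matrix with blocks `g` and `c`. -/
def blk (g : unitaryGroup (Fin 2) K) (c : K) (hc : c * star c = 1) : U3 K :=
  ⟨!![g 0 0, g 0 1, 0; g 1 0, g 1 1, 0; 0, 0, c], by
    obtain ⟨-, h00, h10, h11⟩ := unitary_two g
    refine blk_unitary _ _ _ _ _ h00 ?_ h10 h11 hc
    have := congrArg star h10
    simp only [star_add, star_mul, star_star, star_zero] at this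
    exact this⟩

theorem blk_mul (g g' : unitaryGroup (Fin 2) K) (c c' : K) (hc hc' hcc) :
    blk g c hc * blk g' c' hc' = blk (g * g') (c * c') hcc := by
  ext i j
  rw [mul_entry]
  fin_cases i <;> fin_cases j <;> simp [blk, Matrix.mul_apply, Fin.sum_univ_two]

theorem blk_one (c : K) (hc : c * star c = 1) (h1 : c = 1) : blk 1 c hc = 1 := by
  subst h1
  ext i j
  rw [UnitaryGroup.one_apply]
  fin_cases i <;> fin_cases j <;> simp [blk]

theorem blk_inv (g : unitaryGroup (Fin 2) K) (c : K) (hc hc') :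
    (blk g c hc)⁻¹ = blk g⁻¹ (star c) hc' := by
  apply inv_eq_of_mul_eq_one_right
  rw [blk_mul g g⁻¹ c (star c) hc hc' (by rw [hc, one_mul, star_one]), mul_inv_cancel]
  exact blk_one _ _ hc

theorem norm_mul_one {a b : K} (ha : a * star a = 1) (hb : b * star b = 1) :
    (a * b) * star (a * b) = 1 := by
  rw [star_mul, mul_assoc, ← mul_assoc b, hb, one_mul, ha]

theorem norm_star_one {a : K} (ha : a * star a = 1) : star a * star (star a) = 1 := by
  rw [star_star, mul_comm, ha]

theorem one_norm : (1 : K) * star 1 = 1 := by simp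

theorem homology_ne_zero {t x : K} (ht : t * star t = 1) (ht1 : t ≠ 1) :
    1 + (t + 1) * (x * star x) ≠ 0 := by
  intro h0
  have h1 := congrArg star h0
  simp only [star_add, star_one, star_mul, star_star, star_zero] at h1
  have h2 : (t + star t) * (x * star x) = 0 := by grind
  have h3 : t + star t = 0 := by
    rcases mul_eq_zero.1 h2 with h3 | h3
    · exact h3
    · rw [h3] at h0
      simp at h0
  have h4 : (t + 1) * (t + 1) = 0 := by grind
  exact ht1 (CharTwo.add_eq_zero.1 (mul_self_eq_zero.1 h4))

theorem dg_update_zero (t : K) (ht : t * star t = 1) :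
    dg (Function.update 1 0 t) (update_norm 0 ht) = blk (dg2 t 1 ht one_norm) 1 one_norm := by
  ext i j
  rw [dg_entry]
  fin_cases i <;> fin_cases j <;> simp [blk, dg2]

theorem homology_congr (u u' : U3 K) (h : ∀ i, u i 0 = u' i 0) (t : K) (hd) :
    u * dg (Function.update 1 0 t) hd * u⁻¹ = u' * dg (Function.update 1 0 t) hd * u'⁻¹ := by
  ext i j
  rw [homology_entry, homology_entry, h i, h j]

/-- A subgroup containing the diagonal torus up to the last coordinate, and a homology whose centre
`(s 0 0, s 1 0, 0)` is not on the other sides of the triangle, induces the full unitary group of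
the first two coordinates. -/
theorem blk_mem_of_homology (h : HermField K q) (L : Subgroup (U3 K))
    (hd : ∀ a b ha hb, ∃ c hc, blk (dg2 (K := K) a b ha hb) c hc ∈ L)
    (s : unitaryGroup (Fin 2) K) (h00 : s 0 0 ≠ 0) (h10 : s 1 0 ≠ 0) (t : K)
    (ht : t * star t = 1) (ht1 : t ≠ 1)
    (hs : blk s 1 one_norm * dg (Function.update 1 0 t) (update_norm 0 ht) * (blk s 1 one_norm)⁻¹
      ∈ L) (g : unitaryGroup (Fin 2) K) : ∃ c hc, blk g c hc ∈ L := by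
  let A : Subgroup (unitaryGroup (Fin 2) K) :=
    { carrier := {g | ∃ c hc, blk g c hc ∈ L}
      one_mem' := by
        refine ⟨1, one_norm, ?_⟩
        rw [blk_one 1 one_norm rfl]
        exact L.one_mem
      mul_mem' := by
        rintro a b ⟨c, hc, ha⟩ ⟨c', hc', hb⟩
        refine ⟨c * c', norm_mul_one hc hc', ?_⟩
        rw [← blk_mul a b c c' hc hc']
        exact L.mul_mem ha hb
      inv_mem' := by
        rintro a ⟨c, hc, ha⟩
        refine ⟨star c, norm_star_one hc, ?_⟩
        rw [← blk_inv a c hc]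
        exact L.inv_mem ha }
  have hsA : s * dg2 t 1 ht one_norm * s⁻¹ ∈ A := by
    refine ⟨1 * 1 * star 1, by simp, ?_⟩
    rw [← blk_mul (s * dg2 t 1 ht one_norm) s⁻¹ (1 * 1) (star 1) (by simp) (by simp),
      ← blk_mul s (dg2 t 1 ht one_norm) 1 1 one_norm one_norm,
      ← blk_inv s 1 one_norm (by simp), ← dg_update_zero]
    exact hs
  have hu := (unitary_two s).2
  have ht1' : t + 1 ≠ 0 := fun h0 => ht1 (CharTwo.add_eq_zero.1 h0)
  have e00 : (s * dg2 t 1 ht one_norm * s⁻¹) 0 0 = 1 + (t + 1) * (s 0 0 * star (s 0 0)) := by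
    simp only [UnitaryGroup.mul_apply, Matrix.mul_apply, Fin.sum_univ_two, dg2,
      UnitaryGroup.inv_apply, star_apply, Matrix.of_apply, Matrix.cons_val', Matrix.cons_val_zero,
      Matrix.cons_val_one, Matrix.cons_val_fin_one]
    grind
  have e10 : (s * dg2 t 1 ht one_norm * s⁻¹) 1 0 = (t + 1) * (s 1 0 * star (s 0 0)) := by
    simp only [UnitaryGroup.mul_apply, Matrix.mul_apply, Fin.sum_univ_two, dg2,
      UnitaryGroup.inv_apply, star_apply, Matrix.of_apply, Matrix.cons_val', Matrix.cons_val_zero,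
      Matrix.cons_val_one, Matrix.cons_val_fin_one]
    grind
  have hA : A = ⊤ := by
    refine two_eq_top h A (fun a b ha hb => hd a b ha hb) _ hsA ?_ ?_
    · rw [e00]
      exact homology_ne_zero ht ht1
    · rw [e10]
      exact mul_ne_zero ht1' (mul_ne_zero h10 (by simpa using h00))
  have : g ∈ A := hA ▸ Subgroup.mem_top g
  exact this

/-- The orbit of the first basis vector under `L`. -/
def Orb (L : Subgroup (U3 K)) : Set (Fin 3 → K) := {v | ∃ u ∈ L, v = fun i => u i 0}

theorem Orb_mul {L : Subgroup (U3 K)} {g : U3 K} (hg : g ∈ L) {v : Fin 3 → K} (hv : v ∈ Orb L) :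
    (fun i => g i 0 * v 0 + g i 1 * v 1 + g i 2 * v 2) ∈ Orb L := by
  obtain ⟨u, hu, rfl⟩ := hv
  refine ⟨g * u, L.mul_mem hg hu, ?_⟩
  funext i
  rw [mul_entry]

theorem Orb_norm {L : Subgroup (U3 K)} {v : Fin 3 → K} (hv : v ∈ Orb L) :
    v 0 * star (v 0) + v 1 * star (v 1) + v 2 * star (v 2) = 1 := by
  obtain ⟨u, hu, rfl⟩ := hv
  have := col_inner u 0 0
  rw [if_pos rfl, Fin.sum_univ_three] at this
  rw [← this]
  ring

theorem Orb_perm {L : Subgroup (U3 K)} (hL : Mon K ≤ L) (p : Equiv.Perm (Fin 3)) {v : Fin 3 → K}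
    (hv : v ∈ Orb L) : (fun i => v (p i)) ∈ Orb L := by
  obtain ⟨u, hu, rfl⟩ := hv
  refine ⟨monMk p⁻¹ 1 (fun _ => one_norm) * u, L.mul_mem (hL (monMk_mem _ _ _)) hu, ?_⟩
  funext i
  rw [UnitaryGroup.mul_apply, Matrix.mul_apply, Finset.sum_eq_single (p i)]
  · simp [monMk_entry]
  · intro b _ hb
    rw [monMk_entry, if_neg, zero_mul]
    rintro rfl
    simp at hb
  · simp

theorem Orb_phase {L : Subgroup (U3 K)} (hL : Mon K ≤ L) (d : Fin 3 → K)
    (hd : ∀ i, d i * star (d i) = 1) {v : Fin 3 → K}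
    (hv : v ∈ Orb L) : (fun i => d i * v i) ∈ Orb L := by
  obtain ⟨u, hu, rfl⟩ := hv
  refine ⟨dg d hd * u, L.mul_mem (hL (dg_mem_Mon _ _)) hu, ?_⟩
  funext i
  rw [UnitaryGroup.mul_apply, Matrix.mul_apply, Finset.sum_eq_single i]
  · simp [dg_entry]
  · intro b _ hb
    rw [dg_entry, if_neg hb.symm, zero_mul]
  · simp

theorem Orb_col {L : Subgroup (U3 K)} (hL : Mon K ≤ L) {u : U3 K} (hu : u ∈ L) (k : Fin 3) :
    (fun i => u i k) ∈ Orb L := by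
  refine ⟨u * monMk (Equiv.swap 0 k) 1 (fun _ => one_norm), L.mul_mem hu (hL (monMk_mem _ _ _)), ?_⟩
  funext i
  rw [UnitaryGroup.mul_apply, Matrix.mul_apply, Finset.sum_eq_single k]
  · simp [monMk_entry]
  · intro b _ hb
    rw [monMk_entry, if_neg, mul_zero]
    simpa using hb
  · simp

theorem Orb_swap01 {L : Subgroup (U3 K)} (hL : Mon K ≤ L) {x y z : K} (hv : ![x, y, z] ∈ Orb L) :
    ![y, x, z] ∈ Orb L := by
  convert Orb_perm hL (Equiv.swap 0 1) hv using 1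
  funext i
  fin_cases i <;> rfl

theorem Orb_swap12 {L : Subgroup (U3 K)} (hL : Mon K ≤ L) {x y z : K} (hv : ![x, y, z] ∈ Orb L) :
    ![x, z, y] ∈ Orb L := by
  convert Orb_perm hL (Equiv.swap 1 2) hv using 1
  funext i
  fin_cases i <;> rfl

theorem Orb_homology {L : Subgroup (U3 K)} (hL : Mon K ≤ L) {u : U3 K}
    (hu : (fun i => u i 0) ∈ Orb L) {t : K} (ht : t * star t = 1) :
    u * dg (Function.update 1 0 t) (update_norm 0 ht) * u⁻¹ ∈ L := by
  obtain ⟨w, hw, he⟩ := hu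
  rw [homology_congr u w (fun i => congrFun he i)]
  exact L.mul_mem (L.mul_mem hw (hL (dg_mem_Mon _ _))) (L.inv_mem hw)

/-- A strict overgroup of the monomial group has a vector in its orbit with a coordinate whose norm
is neither `0` nor `1`. -/
theorem exists_orb_norm (h : HermField K q) {L : Subgroup (U3 K)} (hL : Mon K ≤ L) {g : U3 K}
    (hg : g ∈ L) (hgM : g ∉ Mon K) :
    ∃ x y z, ![x, y, z] ∈ Orb L ∧ x ≠ 0 ∧ x * star x ≠ 1 := by
  have red : ∀ v ∈ Orb L, ∀ i, v i ≠ 0 → v i * star (v i) ≠ 1 →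
      ∃ x y z, ![x, y, z] ∈ Orb L ∧ x ≠ 0 ∧ x * star x ≠ 1 := by
    intro v hv i h0 h1
    refine ⟨v i, v (Equiv.swap 0 i 1), v (Equiv.swap 0 i 2), ?_, h0, h1⟩
    convert Orb_perm hL (Equiv.swap 0 i) hv using 1
    funext l
    fin_cases l
    · simp
    · rfl
    · rfl
  rw [mem_Mon] at hgM
  push Not at hgM
  obtain ⟨i, j, k, hij, hne⟩ := hgM
  have hvO := Orb_col hL hg k
  by_cases hall : ∀ l, g l k ≠ 0 → g l k * star (g l k) = 1
  · have hn := Orb_norm hvO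
    have hz : ∀ l, g l k = 0 ∨ g l k * star (g l k) = 1 := fun l => by
      by_cases h0 : g l k = 0
      · exact Or.inl h0
      · exact Or.inr (hall l h0)
    have hi := left_ne_zero_of_mul hne
    have hj := right_ne_zero_of_mul hne
    have hall1 : ∀ l, g l k * star (g l k) = 1 := by
      have hi1 := hall i hi
      have hj1 := hall j hj
      have z0 := hz 0
      have z1 := hz 1
      have z2 := hz 2
      have : ∀ l : Fin 3, l = 0 ∨ l = 1 ∨ l = 2 := by decide
      intro l
      rcases this i with rfl | rfl | rfl <;> rcases this j with rfl | rfl | rfl <;>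
      rcases this l with rfl | rfl | rfl <;> grind
    -- All three coordinates have norm `1`. Apply to the first basis vector the homology with this
    -- centre and eigenvalue `t`; the second coordinate gets norm `(t + 1) * (star t + 1)`, which is `1`
    -- only for `t ^ 3 = 1`.
    obtain ⟨r, hr, hrd⟩ := exists_prime h
    obtain ⟨t, htr, ht1, ht⟩ := h.exists_order hr hrd
    have ht1' : t + 1 ≠ 0 := fun h0 => ht1 (CharTwo.add_eq_zero.1 h0)
    obtain ⟨w, hw, he⟩ := hvO
    have hw' := Orb_homology hL (u := w) ⟨w, hw, rfl⟩ ht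
    have hv0 := Orb_col hL hw' 0
    refine red _ hv0 1 ?_ ?_
    · rw [homology_entry]
      have e0 : g 0 k = w 0 0 := congrFun he 0
      have e1 : g 1 k = w 1 0 := congrFun he 1
      have n0 : w 0 0 ≠ 0 := by
        intro h0
        have := hall1 0
        rw [e0, h0] at this
        simp at this
      have n1 : w 1 0 ≠ 0 := by
        intro h0
        have := hall1 1
        rw [e1, h0] at this
        simp at this
      simp [ht1', n0, n1]
    · rw [homology_entry]
      have e0 : g 0 k = w 0 0 := congrFun he 0
      have e1 : g 1 k = w 1 0 := congrFun he 1
      have n0 := hall1 0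
      have n1 := hall1 1
      rw [e0] at n0
      rw [e1] at n1
      simp only [Fin.isValue, one_ne_zero, if_false, zero_add, star_mul, star_add, star_one,
        star_star]
      intro hcon
      have h1 : (t + 1) * (star t + 1) = 1 := by
        linear_combination hcon - (t + 1) * (star t + 1) * (w 1 0 * star (w 1 0)) * n0
          - (t + 1) * (star t + 1) * n1
      have h2 : t ^ 3 = 1 := by grind
      have h3 : orderOf t = r := by
        haveI := Fact.mk hr
        exact orderOf_eq_prime htr ht1
      have h4 := orderOf_dvd_of_pow_eq_one h2
      rw [h3] at h4
      have h5 := (Nat.prime_dvd_prime_iff_eq hr Nat.prime_three).1 h4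
      rw [h5] at hrd
      have := h.mod_three
      omega
  · push Not at hall
    obtain ⟨l, hl0, hl1⟩ := hall
    exact red _ hvO l hl0 hl1

end Maximal

section Maximal

open Matrix

variable {K : Type*} [Field K] [StarRing K] [CharP K 2] [Finite K] {q : ℕ}

theorem div_norm {x y s : K} (hs : s * star s = x * star x + y * star y) (hs0 : s ≠ 0) :
    x / s * star (x / s) + y / s * star (y / s) = 1 := by
  have hstar : star s ≠ 0 := by simpa using hs0
  rw [star_div₀, star_div₀, div_mul_div_comm, div_mul_div_comm, ← add_div, ← hs]
  exact div_self (mul_ne_zero hs0 hstar)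

/-- The orbit of a strict overgroup of the monomial group meets a side of the triangle outside of
the vertices. If it contains `(x, y, z)` with `y, z ≠ 0`, then the homologies with this centre and
with centre the first vertex induce the full unitary group on the line they span, in particular
they move the first vertex onto the projection `(0, y, z)`. -/
theorem exists_orb_side (h : HermField K q) {L : Subgroup (U3 K)} (hL : Mon K ≤ L) {g : U3 K}
    (hg : g ∈ L) (hgM : g ∉ Mon K) :
    ∃ x y, ![x, y, 0] ∈ Orb L ∧ x ≠ 0 ∧ y ≠ 0 := by
  obtain ⟨x, y, z, hO, hx0, hx1⟩ := exists_orb_norm h hL hg hgM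
  have hn := Orb_norm hO
  simp only [cons_val] at hn
  by_cases hz : z = 0
  · subst hz
    refine ⟨x, y, hO, hx0, ?_⟩
    rintro rfl
    simp at hn
    exact hx1 hn
  by_cases hy : y = 0
  · subst hy
    exact ⟨x, z, Orb_swap12 hL hO, hx0, hz⟩
  obtain ⟨s, hs⟩ := h.exists_norm (c := y * star y + z * star z) (by simp [mul_comm])
  have hs0 : s ≠ 0 := by
    rintro rfl
    rw [zero_mul] at hs
    rw [add_assoc, ← hs, add_zero] at hn
    exact hx1 hn
  obtain ⟨r, hr, hrd⟩ := exists_prime h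
  obtain ⟨t, htr, ht1, ht⟩ := h.exists_order hr hrd
  obtain ⟨Q, hQe⟩ : ∃ Q : U3 K, (Q : Matrix (Fin 3) (Fin 3) K)
      = !![y / s, 0, star (z / s); z / s, 0, star (y / s); 0, 1, 0] := by
    refine ⟨blk (mk2 (y / s) (z / s) (div_norm hs hs0)) 1 one_norm
      * monMk (Equiv.swap 1 2) 1 (fun _ => one_norm), ?_⟩
    generalize hP : monMk (Equiv.swap 1 2) (1 : Fin 3 → K) (fun _ => one_norm) = P
    have hPe : (P : Matrix (Fin 3) (Fin 3) K) = !![1, 0, 0; 0, 0, 1; 0, 1, 0] := by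
      ext i j
      rw [← hP, monMk_entry]
      have : ∀ j : Fin 3, j = 0 ∨ j = 1 ∨ j = 2 := by decide
      rcases this j with rfl | rfl | rfl
      · rw [Equiv.swap_apply_of_ne_of_ne (by decide) (by decide)]
        fin_cases i <;> simp
      · rw [Equiv.swap_apply_left]
        fin_cases i <;> simp
      · rw [Equiv.swap_apply_right]
        fin_cases i <;> simp
    ext i j
    rw [mul_entry, hPe]
    fin_cases i <;> fin_cases j <;> simp [blk, mk2]
  have hmem : ∀ w, w ∈ L.comap (MulAut.conj Q).toMonoidHom ↔ Q * w * Q⁻¹ ∈ L := fun _ => Iff.rfl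
  have hsx : s * star s + x * star x = 1 := by
    rw [hs]
    linear_combination hn
  obtain ⟨c, hc, hcL⟩ := blk_mem_of_homology h (L.comap (MulAut.conj Q).toMonoidHom) (by
      intro a b ha hb
      refine ⟨a, ha, ?_⟩
      have hd : ∀ i, ![a, a, b] i * star (![a, a, b] i) = 1 := by
        intro i
        fin_cases i
        · exact ha
        · exact ha
        · exact hb
      have : Q * blk (dg2 a b ha hb) a ha = dg ![a, a, b] hd * Q := by
        ext i j
        rw [mul_entry Q, mul_entry (dg ![a, a, b] hd) Q, hQe]
        fin_cases i <;> fin_cases j <;> simp [blk, dg2, dg_entry, mul_comm]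
      rw [hmem, this, mul_inv_cancel_right]
      exact hL (dg_mem_Mon _ _))
    (mk2 s x hsx) hs0 hx0 t ht ht1 (by
      rw [hmem]
      have h1 : Q * (blk (mk2 s x hsx) 1 one_norm * dg (Function.update 1 0 t) (update_norm 0 ht)
            * (blk (mk2 s x hsx) 1 one_norm)⁻¹) * Q⁻¹
          = (Q * blk (mk2 s x hsx) 1 one_norm) * dg (Function.update 1 0 t) (update_norm 0 ht)
            * (Q * blk (mk2 s x hsx) 1 one_norm)⁻¹ := by group
      rw [h1]
      refine Orb_homology hL ?_ ht
      convert Orb_swap12 hL (Orb_swap01 hL hO) using 1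
      funext i
      rw [mul_entry, hQe]
      fin_cases i <;> simp [blk, mk2, hs0])
    (mk2 0 1 (by simp))
  rw [hmem] at hcL
  refine ⟨y / s, z / s, ?_, div_ne_zero hy hs0, div_ne_zero hz hs0⟩
  convert Orb_col hL hcL 2 using 1
  funext i
  rw [mul_entry _ Q⁻¹, inv_entry, inv_entry, inv_entry, mul_entry Q, mul_entry Q, mul_entry Q, hQe]
  fin_cases i <;> simp [blk, mk2]

/-- A strict overgroup of the monomial group contains the unitary groups of the sides of the
triangle. -/
theorem blk_mem (h : HermField K q) {L : Subgroup (U3 K)} (hL : Mon K ≤ L) {g : U3 K}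
    (hg : g ∈ L) (hgM : g ∉ Mon K) (m : unitaryGroup (Fin 2) K) : blk m 1 one_norm ∈ L := by
  obtain ⟨x, y, hO, hx, hy⟩ := exists_orb_side h hL hg hgM
  have hn := Orb_norm hO
  simp only [cons_val, zero_mul, add_zero] at hn
  obtain ⟨r, hr, hrd⟩ := exists_prime h
  obtain ⟨t, htr, ht1, ht⟩ := h.exists_order hr hrd
  obtain ⟨c, hc, hcL⟩ := blk_mem_of_homology h L (by
      intro a b ha hb
      refine ⟨1, one_norm, hL ?_⟩
      intro i j k hij
      fin_cases i <;> fin_cases j <;> fin_cases k <;> simp [blk, dg2] at hij ⊢)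
    (mk2 x y hn) hx hy t ht ht1 (by
      refine Orb_homology hL ?_ ht
      convert hO using 1
      funext i
      fin_cases i <;> simp [blk, mk2]) m
  have h1 : blk m 1 one_norm = blk m c hc * blk 1 (star c) (norm_star_one hc) := by
    rw [blk_mul m 1 c (star c) hc _ (by rw [hc, one_norm])]
    ext i j
    fin_cases i <;> fin_cases j <;> simp [blk, hc]
  rw [h1]
  refine L.mul_mem hcL (hL ?_)
  intro i j k hij
  fin_cases i <;> fin_cases j <;> fin_cases k <;> simp [blk] at hij ⊢

theorem trace_phase {t w : K} (ht1 : t ≠ 1) (ht : t * star t = 1) (hw : w ≠ 0)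
    (h0 : w + star w = 0) : t * w + star (t * w) ≠ 0 := by
  intro h1
  rw [star_mul] at h1
  have h2 : star w = w := (CharTwo.add_eq_zero.1 h0).symm
  rw [h2] at h1
  have h3 : w * (t + star t) = 0 := by linear_combination h1
  have h4 := (mul_eq_zero.1 h3).resolve_left hw
  have h5 : (t + 1) * (t + 1) = 0 := by grind
  exact ht1 (CharTwo.add_eq_zero.1 (mul_self_eq_zero.1 h5))

/-- A strict overgroup of the monomial group is transitive on unit vectors. -/
theorem mem_Orb (h : HermField K q) {L : Subgroup (U3 K)} (hL : Mon K ≤ L) {g : U3 K}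
    (hg : g ∈ L) (hgM : g ∉ Mon K) (x y z : K)
    (hn : x * star x + y * star y + z * star z = 1) : ![x, y, z] ∈ Orb L := by
  have hblk := blk_mem h hL hg hgM
  have act : ∀ (m : unitaryGroup (Fin 2) K) (x y z : K), ![x, y, z] ∈ Orb L →
      ![m 0 0 * x + m 0 1 * y, m 1 0 * x + m 1 1 * y, z] ∈ Orb L := by
    intro m x y z hO
    convert Orb_mul (hblk m) hO using 1
    funext i
    fin_cases i <;> simp [blk]
  have base : ![1, 0, 0] ∈ Orb L := by
    refine ⟨1, L.one_mem, ?_⟩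
    funext i
    rw [UnitaryGroup.one_apply]
    fin_cases i <;> simp [Matrix.one_apply]
  have side : ∀ x y : K, x * star x + y * star y = 1 → ![x, y, 0] ∈ Orb L := by
    intro x y hxy
    have := act (mk2 x y hxy) 1 0 0 base
    simpa [mk2] using this
  have main : ∀ x y z : K, x * star x + y * star y + z * star z = 1 →
      x * star x + y * star y ≠ 0 → ![x, y, z] ∈ Orb L := by
    intro x y z hn hxy
    obtain ⟨s, hs⟩ := h.exists_norm (c := x * star x + y * star y) (by simp [mul_comm])
    have hs0 : s ≠ 0 := by
      rintro rfl
      rw [zero_mul] at hs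
      exact hxy hs.symm
    have h1 := Orb_swap12 hL (side s z (by rw [hs]; exact hn))
    have := act (mk2 (x / s) (y / s) (div_norm hs hs0)) s 0 z h1
    simpa [mk2, hs0] using this
  by_cases h1 : x * star x + y * star y = 0
  swap
  · exact main x y z hn h1
  by_cases h2 : y * star y + z * star z = 0
  swap
  · exact Orb_swap01 hL (Orb_swap12 hL (main y z x (by rw [← hn]; ring) h2))
  have hz : z * star z = 1 := by rw [h1, zero_add] at hn; exact hn
  have hy : y * star y = 1 := by grind
  have hx : x * star x = 1 := by grind
  have hx0 : x ≠ 0 := left_ne_zero_of_mul (a := x) (b := star x) (by rw [hx]; exact one_ne_zero)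
  have hy0 : star y ≠ 0 := right_ne_zero_of_mul (a := y) (by rw [hy]; exact one_ne_zero)
  -- All three norms are `1`: a unitary matrix in the first two coordinates changes the norms.
  have hf : ∃ a b : K, a * star a + b * star b = 1 ∧
      b * x * star a * star y + star (b * x * star a * star y) ≠ 0 := by
    obtain ⟨a, b, hO, ha, hb⟩ := exists_orb_side h hL hg hgM
    have hab := Orb_norm hO
    simp only [cons_val, zero_mul, add_zero] at hab
    have ha' : star a ≠ 0 := by simpa using ha
    by_cases h0 : b * x * star a * star y + star (b * x * star a * star y) = 0
    swap
    · exact ⟨a, b, hab, h0⟩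
    obtain ⟨r, hr, hrd⟩ := exists_prime h
    obtain ⟨t, htr, ht1, ht⟩ := h.exists_order hr hrd
    refine ⟨a, t * b, ?_, ?_⟩
    · rw [star_mul]
      linear_combination hab + b * star b * ht
    · have := trace_phase ht1 ht (mul_ne_zero (mul_ne_zero (mul_ne_zero hb hx0) ha') hy0) h0
      convert this using 2
      · ring
      · congr 1
        ring
  obtain ⟨a, b, hab, hT⟩ := hf
  have hab' : a * star a + b * star b = 1 := hab
  simp only [star_mul, star_star] at hT
  have h3 : ![star a * x + star b * y, b * x + a * y, z] ∈ Orb L := by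
    refine Orb_swap01 hL (Orb_swap12 hL (main _ _ _ ?_ ?_))
    · simp only [star_add, star_mul, star_star]
      grind
    · simp only [star_add, star_mul, star_star]
      intro h0
      apply hT
      grind
  have h4 := act (mk2 a b hab) _ _ _ h3
  convert h4 using 1
  funext i
  fin_cases i
  · simp [mk2]
    grind
  · simp [mk2]
    grind
  · simp [mk2]

/-- A unitary matrix fixing the first basis vector is conjugate to a block matrix by a permutation
matrix. -/
theorem exists_blk_conj {w : U3 K} (hw0 : ∀ i, w i 0 = if i = 0 then 1 else 0)
    (hwr : ∀ j, w 0 j = if 0 = j then 1 else 0) :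
    ∃ m : unitaryGroup (Fin 2) K, ∃ P ∈ Mon K, w * P = P * blk m 1 one_norm := by
  have hr := fun i j => row_inner w i j
  simp only [Fin.sum_univ_three] at hr
  have h11 := hr 1 1
  have h12 := hr 1 2
  have h21 := hr 2 1
  have h22 := hr 2 2
  rw [hw0, if_neg (by decide)] at h11 h12
  rw [hw0, if_neg (by decide)] at h21 h22
  simp at h11 h12 h21 h22
  have hm : !![w 1 1, w 1 2; w 2 1, w 2 2] ∈ unitaryGroup (Fin 2) K := by
    rw [mem_unitaryGroup_iff]
    ext i j
    rw [Matrix.mul_apply, Fin.sum_univ_two]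
    simp only [star_apply]
    fin_cases i <;> fin_cases j <;> simp [h11, h12, h21, h22]
  have hwe : (w : Matrix (Fin 3) (Fin 3) K)
      = !![1, 0, 0; 0, w 1 1, w 1 2; 0, w 2 1, w 2 2] := by
    ext i j
    have e1 := hw0 0
    have e2 := hw0 1
    have e3 := hw0 2
    have e4 := hwr 1
    have e5 := hwr 2
    fin_cases i <;> fin_cases j <;> simp [e1, e2, e3, e4, e5]
  generalize hP : monMk (finRotate 3) (1 : Fin 3 → K) (fun _ => one_norm) = P
  have hPe : (P : Matrix (Fin 3) (Fin 3) K) = !![0, 0, 1; 1, 0, 0; 0, 1, 0] := by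
    ext i j
    rw [← hP, monMk_entry]
    have hp0 : finRotate 3 0 = 1 := rfl
    have hp1 : finRotate 3 1 = 2 := rfl
    have hp2 : finRotate 3 2 = 0 := rfl
    have : ∀ j : Fin 3, j = 0 ∨ j = 1 ∨ j = 2 := by decide
    rcases this j with rfl | rfl | rfl
    · rw [hp0]
      fin_cases i <;> simp
    · rw [hp1]
      fin_cases i <;> simp
    · rw [hp2]
      fin_cases i <;> simp
  refine ⟨⟨_, hm⟩, P, hP ▸ monMk_mem _ _ _, ?_⟩
  generalize (w 1 1) = a at *
  generalize (w 1 2) = b at *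
  generalize (w 2 1) = c at *
  generalize (w 2 2) = d at *
  ext i j
  rw [mul_entry w P, mul_entry P, hwe, hPe]
  fin_cases i <;> fin_cases j <;> simp [blk]

/-- The monomial group is a maximal subgroup. -/
theorem isCoatom_Mon (h : HermField K q) : IsCoatom (Mon K) := by
  constructor
  · intro htop
    -- A non-diagonal block matrix is not monomial.
    obtain ⟨r, hr, hrd⟩ := exists_prime h
    obtain ⟨t, htr, ht1, ht⟩ := h.exists_order hr hrd
    obtain ⟨k, hk⟩ := h.exists_trace_one
    obtain ⟨a, ha⟩ := h.exists_norm (c := t + star t) (by simp [add_comm])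
    obtain ⟨b, hb⟩ := h.exists_norm (c := 1 + (t + star t)) (by simp [add_comm])
    have hab : a * star a + b * star b = 1 := by grind
    have h1 : blk (mk2 a b hab) 1 one_norm ∈ Mon K := htop ▸ Subgroup.mem_top _
    have h2 : a * b = 0 := h1 0 1 0 (by decide)
    have ht3 : t ^ 3 ≠ 1 := by
      intro h2
      have h3 : orderOf t = r := by
        haveI := Fact.mk hr
        exact orderOf_eq_prime htr ht1
      have h4 := orderOf_dvd_of_pow_eq_one h2
      rw [h3] at h4
      have h5 := (Nat.prime_dvd_prime_iff_eq hr Nat.prime_three).1 h4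
      rw [h5] at hrd
      have := h.mod_three
      omega
    rcases mul_eq_zero.1 h2 with h0 | h0
    · rw [h0, zero_mul] at ha
      have h5 : (t + 1) * (t + 1) = 0 := by grind
      exact ht1 (CharTwo.add_eq_zero.1 (mul_self_eq_zero.1 h5))
    · rw [h0, zero_mul] at hb
      apply ht3
      grind
  · intro L hlt
    obtain ⟨hle, g, hg, hgM⟩ := SetLike.lt_iff_le_and_exists.1 hlt
    refine (Subgroup.eq_top_iff' L).2 fun u => ?_
    have hu := col_inner u 0 0
    rw [if_pos rfl, Fin.sum_univ_three] at hu
    obtain ⟨l, hl, he⟩ := mem_Orb h hle hg hgM (u 0 0) (u 1 0) (u 2 0) (by rw [← hu]; ring)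
    have hcol : ∀ i, u i 0 = l i 0 := by
      intro i
      have := congrFun he i
      fin_cases i
      · exact this
      · exact this
      · exact this
    -- `l⁻¹ * u` fixes the first basis vector, hence comes from the unitary group of a side.
    set w := l⁻¹ * u with hw
    have hw0 : ∀ i, w i 0 = if i = 0 then 1 else 0 := by
      intro i
      rw [hw, UnitaryGroup.mul_apply, Matrix.mul_apply, ← col_inner l i 0]
      exact Finset.sum_congr rfl fun j _ => by rw [hcol j, inv_entry]
    have hwr : ∀ j, w 0 j = if 0 = j then 1 else 0 := by
      intro j
      rw [← col_inner w 0 j, Fin.sum_univ_three, hw0, hw0, hw0]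
      simp
    obtain ⟨m, P, hP, hwp⟩ := exists_blk_conj hw0 hwr
    have hmon : P ∈ L := hle hP
    have hwL : w ∈ L := by
      have : w = P * blk m 1 one_norm * P⁻¹ := by
        rw [← hwp, mul_inv_cancel_right]
      rw [this]
      exact L.mul_mem (L.mul_mem hmon (blk_mem h hle hg hgM m)) (L.inv_mem hmon)
    have : u = l * w := by rw [hw, mul_inv_cancel_left]
    rw [this]
    exact L.mul_mem hl hwL

end Maximal

/-! ### The triangles normalised by an involution -/

section Count

open Matrix

variable {K : Type*} [Field K] [StarRing K] [CharP K 2] [Finite K] {q : ℕ}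

/-- The standard hermitian form, semilinear in the first variable. -/
def hm (u v : Fin 3 → K) : K := star (u 0) * v 0 + star (u 1) * v 1 + star (u 2) * v 2

theorem hm_add_smul_left (u v w : Fin 3 → K) (a : K) :
    hm (u + a • v) w = hm u w + star a * hm v w := by
  simp only [hm, Pi.add_apply, Pi.smul_apply, smul_eq_mul, star_add, star_mul]
  ring

theorem star_hm (u v : Fin 3 → K) : star (hm u v) = hm v u := by
  simp only [hm, star_add, star_mul, star_star]

theorem hm_add_smul_right (u v w : Fin 3 → K) (a : K) :
    hm w (u + a • v) = hm w u + a * hm w v := by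
  simp only [hm, Pi.add_apply, Pi.smul_apply, smul_eq_mul]
  ring

/-- The vectors `v` with `h(v, e) = 1` form a hyperplane of `q ^ 4` vectors. -/
theorem card_hyperplane (h : HermField K q) {e : Fin 3 → K} (he : e ≠ 0) :
    Nat.card {v : Fin 3 → K // hm v e = 1} = q ^ 4 := by
  obtain ⟨z, hz⟩ : ∃ z : Fin 3 → K, hm z e = 1 := by
    obtain ⟨k, hk⟩ := Function.ne_iff.1 he
    have hk' : e k ≠ 0 := hk
    refine ⟨Pi.single k (star (e k)⁻¹), ?_⟩
    fin_cases k <;> simp [hm] at hk' ⊢ <;> exact inv_mul_cancel₀ hk'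
  let E : (Fin 3 → K) ≃ K × {v : Fin 3 → K // hm v e = 1} :=
    { toFun := fun v => (hm v e, ⟨v + star (1 + hm v e) • z, by
        rw [hm_add_smul_left, hz, star_star]
        grind⟩)
      invFun := fun x => x.2.1 + star (1 + x.1) • z
      left_inv := by
        intro v
        funext i
        simp only [Pi.add_apply, Pi.smul_apply, smul_eq_mul]
        grind
      right_inv := by
        rintro ⟨a, v, hv⟩
        have h1 : hm (v + star (1 + a) • z) e = a := by
          rw [hm_add_smul_left, hz, star_star, hv]
          grind
        refine Prod.ext h1 (Subtype.ext ?_)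
        funext i
        simp only [h1, Pi.add_apply, Pi.smul_apply, smul_eq_mul]
        grind }
  have h1 := Nat.card_congr E
  rw [Nat.card_prod, Nat.card_fun, Nat.card_fin, h.card] at h1
  have hq : 0 < q ^ 2 := pow_pos (by have := h.four_le; omega) 2
  refine Nat.eq_of_mul_eq_mul_left hq ?_
  rw [← h1]
  ring

/-- In this hyperplane the value `h(v, v)` is equidistributed over the subfield fixed by the
involution: translation by `y • e` adds the trace of `y` to it. -/
theorem card_unit (h : HermField K q) {e : Fin 3 → K} (he : e ≠ 0) (hee : hm e e = 0) :
    Nat.card {v : Fin 3 → K // hm v v = 1 ∧ hm v e = 1} = q ^ 3 := by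
  obtain ⟨k, hk⟩ := h.exists_trace_one
  have key : ∀ v : Fin 3 → K, hm v e = 1 → ∀ a : K, star a = a →
      hm (v + ((a + 1) * k) • e) e = 1 ∧
      hm (v + ((a + 1) * k) • e) (v + ((a + 1) * k) • e) = hm v v + a + 1 := by
    intro v hv a ha
    have hv' : hm e v = 1 := by rw [← star_hm, hv, star_one]
    constructor
    · rw [hm_add_smul_left, hv, hee, mul_zero, add_zero]
    · rw [hm_add_smul_left, hm_add_smul_right, hm_add_smul_right, hv, hv', hee]
      simp only [star_mul, star_add, star_one, ha]
      linear_combination (a + 1) * hk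
  let E : {v : Fin 3 → K // hm v e = 1} ≃
      {x : K // star x = x} × {v : Fin 3 → K // hm v v = 1 ∧ hm v e = 1} :=
    { toFun := fun v => (⟨hm v.1 v.1, star_hm _ _⟩, ⟨v.1 + ((hm v.1 v.1 + 1) * k) • e, by
        obtain ⟨h1, h2⟩ := key v.1 v.2 (hm v.1 v.1) (star_hm _ _)
        refine ⟨?_, h1⟩
        rw [h2]
        grind⟩)
      invFun := fun x => ⟨x.2.1 + ((x.1.1 + 1) * k) • e, (key _ x.2.2.2 _ x.1.2).1⟩
      left_inv := by
        rintro ⟨v, hv⟩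
        refine Subtype.ext ?_
        funext i
        simp only [Pi.add_apply, Pi.smul_apply, smul_eq_mul]
        grind
      right_inv := by
        rintro ⟨⟨a, ha⟩, v, hv, hve⟩
        have h1 : hm (v + ((a + 1) * k) • e) (v + ((a + 1) * k) • e) = a := by
          rw [(key v hve a ha).2, hv]
          grind
        refine Prod.ext (Subtype.ext h1) (Subtype.ext ?_)
        funext i
        simp only [h1, Pi.add_apply, Pi.smul_apply, smul_eq_mul]
        grind }
  have h1 := Nat.card_congr E
  rw [Nat.card_prod, card_hyperplane h he, h.card_fixed] at h1
  have hq : 0 < q := by have := h.four_le; omega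
  refine Nat.eq_of_mul_eq_mul_left hq ?_
  rw [← h1]
  ring

theorem sum_three (f : Fin 3 → K) {i j k : Fin 3} (hij : i ≠ j) (hik : i ≠ k) (hjk : j ≠ k) :
    f 0 + f 1 + f 2 = f i + f j + f k := by
  have := Finset.sum_subset (Finset.subset_univ {i, j, k}) (f := f) (by
    intro l _ hl
    exfalso
    revert i j k l
    decide)
  rw [Finset.sum_insert (by simp [hij, hik]), Finset.sum_insert (by simp [hjk]),
    Finset.sum_singleton, Fin.sum_univ_three] at this
  rw [← this]
  ring

/-- An involution of the unitary group in characteristic two is a transvection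
`1 + e * e^*` with `e` isotropic. -/
theorem exists_transvection (h : HermField K q) {s : U3 K} (hs : s * s = 1) (hs1 : s ≠ 1) :
    ∃ e : Fin 3 → K, e ≠ 0 ∧ hm e e = 0 ∧
      ∀ i j, s i j = (if i = j then 1 else 0) + e i * star (e j) := by
  have hherm : ∀ i j, star (s i j) = s j i := by
    intro i j
    rw [← inv_entry, inv_eq_of_mul_eq_one_left hs]
  have hsq : ∀ i j, s i 0 * s 0 j + s i 1 * s 1 j + s i 2 * s 2 j = if i = j then 1 else 0 := by
    intro i j
    rw [← mul_entry, hs, UnitaryGroup.one_apply, Matrix.one_apply]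
  obtain ⟨N, hN⟩ : ∃ N : Fin 3 → Fin 3 → K, ∀ i j, N i j = s i j + if i = j then 1 else 0 :=
    ⟨_, fun _ _ => rfl⟩
  have hsN : ∀ i j, s i j = (if i = j then 1 else 0) + N i j := by
    intro i j
    rw [hN]
    grind
  have hNh : ∀ i j, star (N i j) = N j i := by
    intro i j
    rw [hN, hN, star_add, hherm]
    by_cases hij : i = j
    · simp [hij]
    · simp [hij, Ne.symm hij]
  have hN2 : ∀ i j, N i 0 * N 0 j + N i 1 * N 1 j + N i 2 * N 2 j = 0 := by
    intro i j
    have := hsq i j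
    simp only [hN]
    fin_cases i <;> fin_cases j <;> simp at this ⊢ <;> grind
  -- `N = s - 1` is hermitian and squares to zero; the rest shows that it has rank one.
  have htr : N 0 0 + N 1 1 + N 2 2 = 0 := by
    refine mul_self_eq_zero.1 ?_
    have h0 := hN2 0 0
    have h1 := hN2 1 1
    have h2 := hN2 2 2
    grind
  have sq : ∀ a b : K, a * a = b * b → a = b := by
    intro a b hab
    have : (a + b) * (a + b) = 0 := by grind
    exact CharTwo.add_eq_zero.1 (mul_self_eq_zero.1 this)
  -- The off-diagonal entries of `N * N = 0`, using that the trace of `N` vanishes.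
  have hoff : ∀ i j k, i ≠ j → i ≠ k → j ≠ k → N k k * N i j = N i k * N k j := by
    intro i j k hij hik hjk
    have h1 := hN2 i j
    have h2 := sum_three (fun l => N l l) hij hik hjk
    rw [htr] at h2
    rw [sum_three (fun l => N i l * N l j) hij hik hjk] at h1
    grind
  have hdiag : ∀ i j, N i i * N j j = N i j * N j i := by
    intro i j
    by_cases hij : i = j
    · rw [hij]
    obtain ⟨k, hik, hjk⟩ : ∃ k, i ≠ k ∧ j ≠ k := by revert i j; decide
    refine sq _ _ ?_
    have h1 := hN2 i i
    have h2 := hN2 j j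
    have h3 := hN2 k k
    have h4 := hoff i j k hij hik hjk
    have h5 := hoff j i k (Ne.symm hij) hjk hik
    rw [sum_three (fun l => N i l * N l i) hij hik hjk] at h1
    rw [sum_three (fun l => N j l * N l j) hij hik hjk] at h2
    rw [sum_three (fun l => N k l * N l k) hij hik hjk] at h3
    grind
  have hminor : ∀ i j k, N k k * N i j = N i k * N k j := by
    intro i j k
    by_cases hik : i = k
    · rw [hik]
    by_cases hjk : j = k
    · rw [hjk, mul_comm]
    by_cases hij : i = j
    · rw [← hij, hdiag, mul_comm]
    · exact hoff i j k hij hik hjk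
  obtain ⟨k, hk⟩ : ∃ k, N k k ≠ 0 := by
    by_contra! hall
    apply hs1
    ext i j
    rw [UnitaryGroup.one_apply, Matrix.one_apply, hsN]
    have h1 := hdiag i j
    rw [hall, zero_mul, ← hNh i j] at h1
    rcases mul_eq_zero.1 h1.symm with h2 | h2
    · rw [h2, add_zero]
    · rw [star_eq_zero.1 h2, add_zero]
  -- A nonzero column of `N` is rescaled to give `e`.
  obtain ⟨t, ht⟩ := h.exists_norm (c := (N k k)⁻¹) (by rw [star_inv₀, hNh])
  have hrank : ∀ i j, t * N i k * star (t * N j k) = N i j := by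
    intro i j
    rw [star_mul, hNh]
    calc t * N i k * (N k j * star t) = (t * star t) * (N i k * N k j) := by ring
      _ = (N k k)⁻¹ * (N k k * N i j) := by rw [ht, hminor]
      _ = N i j := inv_mul_cancel_left₀ hk _
  refine ⟨fun i => t * N i k, ?_, ?_, ?_⟩
  · intro h0
    have h1 := hrank k k
    have h2 : t * N k k = 0 := congrFun h0 k
    rw [h2, zero_mul] at h1
    exact hk h1.symm
  · rw [← htr, ← hrank 0 0, ← hrank 1 1, ← hrank 2 2, hm]
    ring
  · intro i j
    rw [hrank, hsN]

end Count

section Count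

open Matrix

variable {K : Type*} [Field K] [StarRing K] [CharP K 2] [Finite K] {q : ℕ}

theorem fin_three (k : Fin 3) : k = 0 ∨ k = 1 ∨ k = 2 := by
  revert k
  decide

theorem conjMon_mul_of_mem (u : U3 K) {m : U3 K} (hm : m ∈ Mon K) :
    conjMon (u * m) = conjMon u := by
  ext x
  rw [mem_conjMon, mem_conjMon]
  have : (u * m)⁻¹ * x * (u * m) = m⁻¹ * (u⁻¹ * x * u) * m := by group
  rw [this, (Mon K).mul_mem_cancel_right hm, (Mon K).mul_mem_cancel_left ((Mon K).inv_mem hm)]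

theorem conjMon_eq_iff (h : HermField K q) (u v : U3 K) :
    conjMon u = conjMon v ↔ u⁻¹ * v ∈ Mon K := by
  constructor
  · intro huv
    refine Mon_self_normalizing h fun m hm => ?_
    have h1 : u * m * u⁻¹ ∈ conjMon v := by
      rw [← huv, mem_conjMon]
      have : u⁻¹ * (u * m * u⁻¹) * u = m := by group
      rwa [this]
    rw [mem_conjMon] at h1
    have : (u⁻¹ * v)⁻¹ * m * (u⁻¹ * v) = v⁻¹ * (u * m * u⁻¹) * v := by group
    rwa [this]
  · intro hm
    rw [← conjMon_mul_of_mem u hm, mul_inv_cancel_left]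

/-- A hermitian basis is determined up to a scalar on the last vector by its first two vectors. -/
theorem conjMon_eq_of_col {u v : U3 K} (h0 : ∀ i, u i 0 = v i 0) (h1 : ∀ i, u i 1 = v i 1) :
    conjMon u = conjMon v := by
  have e0 : ∀ i, (u⁻¹ * v) i 0 = if i = 0 then 1 else 0 := by
    intro i
    rw [mul_entry, inv_entry, inv_entry, inv_entry, ← h0, ← h0, ← h0, ← col_inner u i 0,
      Fin.sum_univ_three]
  have e1 : ∀ i, (u⁻¹ * v) i 1 = if i = 1 then 1 else 0 := by
    intro i
    rw [mul_entry, inv_entry, inv_entry, inv_entry, ← h1, ← h1, ← h1, ← col_inner u i 1,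
      Fin.sum_univ_three]
  have hmem : u⁻¹ * v ∈ Mon K := by
    generalize u⁻¹ * v = m at *
    have r : ∀ i, i ≠ 2 → m i 2 = 0 := by
      intro i hi
      have := row_inner m i i
      rw [if_pos rfl, Fin.sum_univ_three, e0, e1] at this
      fin_cases i <;> simp at hi this ⊢ <;> exact this
    rw [mem_Mon]
    intro i j k hij
    rcases fin_three k with rfl | rfl | rfl
    · rw [e0, e0]
      grind
    · rw [e1, e1]
      grind
    · by_cases hi : i = 2
      · rw [r j (by rw [← hi]; exact Ne.symm hij), mul_zero]
      · rw [r i hi, zero_mul]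
  rw [← conjMon_mul_of_mem u hmem, mul_inv_cancel_left]

theorem mem_unitary_of_col {a b f : Fin 3 → K} (haa : hm a a = 1) (hbb : hm b b = 1)
    (hff : hm f f = 1) (hab : hm a b = 0) (haf : hm a f = 0) (hbf : hm b f = 0) :
    !![a 0, b 0, f 0; a 1, b 1, f 1; a 2, b 2, f 2] ∈ unitaryGroup (Fin 3) K := by
  have hba := congrArg star hab
  have hfa := congrArg star haf
  have hfb := congrArg star hbf
  rw [star_hm, star_zero] at hba hfa hfb
  rw [hm] at *
  rw [mem_unitaryGroup_iff']
  ext i j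
  rw [Matrix.mul_apply, Fin.sum_univ_three]
  simp only [star_apply]
  rcases fin_three i with rfl | rfl | rfl
  · fin_cases j
    · exact haa
    · exact hab
    · exact haf
  · fin_cases j
    · exact hba
    · exact hbb
    · exact hbf
  · fin_cases j
    · exact hfa
    · exact hfb
    · exact hff

/-- `u` maps the isotropic vector `(1, 1, 0)` to `e`. -/
def Frame (e : Fin 3 → K) (u : U3 K) : Prop := ∀ i, u i 0 + u i 1 = e i

theorem frame_col {e : Fin 3 → K} {u : U3 K} (hu : Frame e u) :
    hm (fun i => u i 0) (fun i => u i 0) = 1 ∧ hm (fun i => u i 0) e = 1 := by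
  have h00 := col_inner u 0 0
  have h01 := col_inner u 0 1
  rw [if_pos rfl, Fin.sum_univ_three] at h00
  rw [if_neg (by decide), Fin.sum_univ_three] at h01
  refine ⟨h00, ?_⟩
  rw [hm, ← hu, ← hu, ← hu]
  linear_combination h00 + h01

/-- The vectors `c`, `c + e` and the conjugate of their cross product are a hermitian basis. -/
theorem exists_frame {c e : Fin 3 → K} (hee : hm e e = 0) (hcc : hm c c = 1) (hce : hm c e = 1) :
    ∃ u : U3 K, Frame e u ∧ ∀ i, u i 0 = c i := by
  have hec : hm e c = 1 := by rw [← star_hm, hce, star_one]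
  obtain ⟨d, hd⟩ : ∃ d : Fin 3 → K, d = c + (1 : K) • e := ⟨_, rfl⟩
  have hcd : hm c d = 0 := by
    rw [hd, hm_add_smul_right, hcc, hce]
    grind
  have hdd : hm d d = 1 := by
    rw [hd, hm_add_smul_right, hm_add_smul_left, hm_add_smul_left, hcc, hce, hec, hee, star_one]
    grind
  obtain ⟨f, hf⟩ : ∃ f : Fin 3 → K, f = ![star (c 1 * d 2 + c 2 * d 1),
    star (c 2 * d 0 + c 0 * d 2), star (c 0 * d 1 + c 1 * d 0)] := ⟨_, rfl⟩
  have hf0 : f 0 = star (c 1 * d 2 + c 2 * d 1) := by rw [hf]; rfl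
  have hf1 : f 1 = star (c 2 * d 0 + c 0 * d 2) := by rw [hf]; rfl
  have hf2 : f 2 = star (c 0 * d 1 + c 1 * d 0) := by rw [hf]; rfl
  have hcf : hm c f = 0 := by
    rw [hm, hf0, hf1, hf2]
    simp only [star_add, star_mul]
    grind
  have hdf : hm d f = 0 := by
    rw [hm, hf0, hf1, hf2]
    simp only [star_add, star_mul]
    grind
  -- Lagrange's identity for the norm of the cross product.
  have hff : hm f f = 1 := by
    have h1 : hm f f = hm c c * hm d d + hm c d * hm d c := by
      simp only [hm, hf0, hf1, hf2, star_add, star_mul, star_star]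
      grind
    rw [h1, hcc, hdd, hcd, zero_mul, add_zero, one_mul]
  refine ⟨⟨_, mem_unitary_of_col hcc hdd hff hcd hcf hdf⟩, ?_, ?_⟩
  · have hi : ∀ i, c i + d i = e i := by
      intro i
      rw [hd, Pi.add_apply, Pi.smul_apply, smul_eq_mul]
      grind
    intro i
    rcases fin_three i with rfl | rfl | rfl
    · exact hi 0
    · exact hi 1
    · exact hi 2
  · intro i
    rcases fin_three i with rfl | rfl | rfl <;> rfl

/-- The transvection `1 + e * e^*` in the hermitian basis given by `u`. -/
theorem transvection_conj {s : U3 K} {e : Fin 3 → K}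
    (hs : ∀ i j, s i j = (if i = j then 1 else 0) + e i * star (e j)) (u : U3 K)
    {w : Fin 3 → K} (hw : ∀ i, e i = u i 0 * w 0 + u i 1 * w 1 + u i 2 * w 2) (i j : Fin 3) :
    (u⁻¹ * s * u) i j = (if i = j then 1 else 0) + w i * star (w j) := by
  have h1 : ∀ k, star (u 0 k) * e 0 + star (u 1 k) * e 1 + star (u 2 k) * e 2 = w k := by
    intro k
    have c0 := col_inner u k 0
    have c1 := col_inner u k 1
    have c2 := col_inner u k 2
    rw [Fin.sum_univ_three] at c0 c1 c2
    rw [hw 0, hw 1, hw 2]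
    have hk : w k = (if k = 0 then 1 else 0) * w 0 + (if k = 1 then 1 else 0) * w 1
        + (if k = 2 then 1 else 0) * w 2 := by
      rcases fin_three k with rfl | rfl | rfl <;> simp
    rw [hk]
    linear_combination w 0 * c0 + w 1 * c1 + w 2 * c2
  have h2 : ∀ k, star (e 0) * u 0 k + star (e 1) * u 1 k + star (e 2) * u 2 k = star (w k) := by
    intro k
    rw [← h1 k]
    simp only [star_add, star_mul, star_star]
  have h3 : ∀ k j, (s * u) k j = u k j + e k * star (w j) := by
    intro k j
    rw [mul_entry, hs, hs, hs, ← h2]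
    fin_cases k <;> simp <;> ring
  have h4 := col_inner u i j
  rw [Fin.sum_univ_three] at h4
  rw [mul_assoc, mul_entry, h3, h3, h3, inv_entry, inv_entry, inv_entry, ← h4, ← h1 i]
  ring

theorem mem_conjMon_of_frame {s : U3 K} {e : Fin 3 → K}
    (hs : ∀ i j, s i j = (if i = j then 1 else 0) + e i * star (e j)) {u : U3 K}
    (hu : Frame e u) : s ∈ conjMon u := by
  rw [mem_conjMon, mem_Mon]
  have h1 := transvection_conj hs u (w := ![1, 1, 0]) (by intro i; rw [← hu i]; simp)
  intro i j k hij
  rw [h1, h1]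
  fin_cases i <;> fin_cases j <;> fin_cases k <;> simp at hij ⊢ <;> grind

theorem form_apply (u : U3 K) (w : Fin 3 → K) :
    star (u 0 0 * w 0 + u 0 1 * w 1 + u 0 2 * w 2) * (u 0 0 * w 0 + u 0 1 * w 1 + u 0 2 * w 2)
      + star (u 1 0 * w 0 + u 1 1 * w 1 + u 1 2 * w 2)
        * (u 1 0 * w 0 + u 1 1 * w 1 + u 1 2 * w 2)
      + star (u 2 0 * w 0 + u 2 1 * w 1 + u 2 2 * w 2)
        * (u 2 0 * w 0 + u 2 1 * w 1 + u 2 2 * w 2)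
      = w 0 * star (w 0) + w 1 * star (w 1) + w 2 * star (w 2) := by
  have c (i j : Fin 3) (x : K) (hx : (if i = j then 1 else 0) = x) :
      star (u 0 i) * u 0 j + star (u 1 i) * u 1 j + star (u 2 i) * u 2 j = x := by
    rw [← hx, ← col_inner u i j, Fin.sum_univ_three]
  have c00 := c 0 0 1 rfl
  have c01 := c 0 1 0 rfl
  have c02 := c 0 2 0 rfl
  have c10 := c 1 0 0 rfl
  have c11 := c 1 1 1 rfl
  have c12 := c 1 2 0 rfl
  have c20 := c 2 0 0 rfl
  have c21 := c 2 1 0 rfl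
  have c22 := c 2 2 1 rfl
  simp only [star_add, star_mul]
  linear_combination (star (w 0) * w 0) * c00 + star (w 0) * w 1 * c01
    + star (w 0) * w 2 * c02 + star (w 1) * w 0 * c10 + star (w 1) * w 1 * c11
    + star (w 1) * w 2 * c12 + star (w 2) * w 0 * c20 + star (w 2) * w 1 * c21
    + star (w 2) * w 2 * c22

/-- If a transvection permutes the vertices of a triangle, then it interchanges two of them, and
the vertices may be normalised so that its centre is the sum of these two. -/
theorem exists_frame_of_mem {s : U3 K} {e : Fin 3 → K} (he : e ≠ 0) (hee : hm e e = 0)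
    (hs : ∀ i j, s i j = (if i = j then 1 else 0) + e i * star (e j)) {u : U3 K}
    (hsu : s ∈ conjMon u) : ∃ v, Frame e v ∧ conjMon v = conjMon u := by
  rw [mem_conjMon, mem_Mon] at hsu
  obtain ⟨w, hw⟩ : ∃ w : Fin 3 → K, ∀ i, e i = u i 0 * w 0 + u i 1 * w 1 + u i 2 * w 2 := by
    refine ⟨fun k => star (u 0 k) * e 0 + star (u 1 k) * e 1 + star (u 2 k) * e 2, ?_⟩
    intro i
    have r0 := row_inner u i 0
    have r1 := row_inner u i 1
    have r2 := row_inner u i 2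
    rw [Fin.sum_univ_three] at r0 r1 r2
    have hi : e i = (if i = 0 then 1 else 0) * e 0 + (if i = 1 then 1 else 0) * e 1
        + (if i = 2 then 1 else 0) * e 2 := by
      rcases fin_three i with rfl | rfl | rfl <;> simp
    rw [hi]
    linear_combination - e 0 * r0 - e 1 * r1 - e 2 * r2
  have hc := transvection_conj hs u hw
  have hmon : ∀ i j k, i ≠ j → ((if i = k then 1 else 0) + w i * star (w k))
      * ((if j = k then 1 else 0) + w j * star (w k)) = 0 := by
    intro i j k hij
    rw [← hc, ← hc]
    exact hsu i j k hij
  have hww : w 0 * star (w 0) + w 1 * star (w 1) + w 2 * star (w 2) = 0 := by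
    rw [← hee, hm, hw 0, hw 1, hw 2]
    exact (form_apply u w).symm
  -- With `w` the coordinates of `e` in the basis `u`, no column of `1 + w * w^*` has two nonzero
  -- entries, so one coordinate vanishes.
  obtain ⟨k, hk⟩ : ∃ k, w k = 0 := by
    have h1 := hmon 0 1 2 (by decide)
    simp at h1
    rcases h1 with h1 | h1
    · rcases h1 with h1 | h1
      · exact ⟨0, h1⟩
      · exact ⟨2, h1⟩
    · rcases h1 with h1 | h1
      · exact ⟨1, h1⟩
      · exact ⟨2, h1⟩
  obtain ⟨p, hp⟩ : ∃ p : Equiv.Perm (Fin 3), p 2 = k := ⟨Equiv.swap 2 k, Equiv.swap_apply_left _ _⟩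
  have hp01 : p 0 ≠ p 1 := p.injective.ne (by decide)
  have hp02 : p 0 ≠ p 2 := p.injective.ne (by decide)
  have hp12 : p 1 ≠ p 2 := p.injective.ne (by decide)
  rw [← hp] at hk
  rw [sum_three (fun i => w i * star (w i)) hp01 hp02 hp12, hk, zero_mul, add_zero] at hww
  have heq : w (p 0) * star (w (p 0)) = w (p 1) * star (w (p 1)) := CharTwo.add_eq_zero.1 hww
  have hne : w (p 0) ≠ 0 := by
    intro h0
    have h1 : w (p 1) = 0 := by
      rw [h0, zero_mul] at heq
      simpa using heq.symm
    have hall : ∀ i, w i = 0 := by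
      intro i
      obtain ⟨j, rfl⟩ := p.surjective i
      fin_cases j
      · exact h0
      · exact h1
      · exact hk
    apply he
    funext i
    rw [hw, hall, hall, hall]
    simp
  have hne1 : w (p 1) ≠ 0 := by
    intro h0
    rw [h0, zero_mul] at heq
    exact hne (by simpa using heq)
  have hn0 : w (p 0) * star (w (p 0)) = 1 := by
    have h1 := hmon (p 0) (p 1) (p 0) hp01
    rw [if_pos rfl, if_neg (Ne.symm hp01), zero_add] at h1
    exact (CharTwo.add_eq_zero.1 ((mul_eq_zero.1 h1).resolve_right
      (mul_ne_zero hne1 (star_ne_zero.2 hne)))).symm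
  have hd : ∀ i, ![w (p 0), w (p 1), 1] i * star (![w (p 0), w (p 1), 1] i) = 1 := by
    intro i
    fin_cases i
    · exact hn0
    · exact heq ▸ hn0
    · exact one_norm
  refine ⟨u * monMk p _ hd, ?_, conjMon_mul_of_mem u (monMk_mem _ _ _)⟩
  intro i
  have hentry : ∀ k, (u * monMk p _ hd) i k = u i (p k) * ![w (p 0), w (p 1), 1] k := by
    intro k
    rw [UnitaryGroup.mul_apply, Matrix.mul_apply, Finset.sum_eq_single (p k)]
    · rw [monMk_entry, if_pos rfl]
    · intro j _ hj
      rw [monMk_entry, if_neg hj, mul_zero]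
    · simp
  rw [hentry, hentry, hw i, sum_three (fun k => u i k * w k) hp01 hp02 hp12, hk]
  simp

end Count

section Count

open Matrix

variable {K : Type*} [Field K] [StarRing K] [CharP K 2] [Finite K] {q : ℕ}

/-- Two hermitian bases `u, v` with `u₀ + u₁ = v₀ + v₁` give the same triangle only if
`{u₀, u₁} = {v₀, v₁}`. -/
theorem frame_col_of_conjMon_eq (h : HermField K q) {e : Fin 3 → K} {u v : U3 K}
    (hu : Frame e u) (hv : Frame e v) (huv : conjMon u = conjMon v) :
    (∀ i, v i 0 = u i 0) ∨ ∀ i, v i 0 = u i 1 := by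
  obtain ⟨p, d, hd, hm⟩ := mon_exists ((conjMon_eq_iff h u v).1 huv)
  obtain rfl : v = u * monMk p d hd := by rw [← hm, mul_inv_cancel_left]
  have hentry : ∀ i k, (u * monMk p d hd) i k = u i (p k) * d k := by
    intro i k
    rw [UnitaryGroup.mul_apply, Matrix.mul_apply, Finset.sum_eq_single (p k)]
    · rw [monMk_entry, if_pos rfl]
    · intro j _ hj
      rw [monMk_entry, if_neg hj, mul_zero]
    · simp
  have heq : ∀ i, u i (p 0) * d 0 + u i (p 1) * d 1 = u i 0 + u i 1 := by
    intro i
    rw [← hentry, ← hentry, hv i, hu i]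
  have hp01 : p 1 ≠ p 0 := p.injective.ne (by decide)
  -- The inner product of the equation `heq` with the column `p 0` of `u`.
  have hcol : d 0 = (if p 0 = 0 then 1 else 0) + if p 0 = 1 then 1 else 0 := by
    have c0 := col_inner u (p 0) 0
    have c1 := col_inner u (p 0) 1
    have c2 := col_inner u (p 0) (p 0)
    have c3 := col_inner u (p 0) (p 1)
    rw [Fin.sum_univ_three] at c0 c1 c2 c3
    rw [if_pos rfl] at c2
    rw [if_neg hp01.symm] at c3
    rw [← c0, ← c1]
    linear_combination star (u 0 (p 0)) * heq 0 + star (u 1 (p 0)) * heq 1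
      + star (u 2 (p 0)) * heq 2 - d 0 * c2 - d 1 * c3
  simp only [hentry]
  rcases fin_three (p 0) with h0 | h0 | h0
  · left
    intro i
    rw [hcol, h0]
    simp
  · right
    intro i
    rw [hcol, h0]
    simp
  · exfalso
    have hd0 := hd 0
    rw [hcol, h0] at hd0
    simp at hd0

theorem Frame.swap {e : Fin 3 → K} {u : U3 K} (hu : Frame e u) :
    ∃ v, Frame e v ∧ conjMon v = conjMon u ∧ ∀ i, v i 0 = u i 1 := by
  have hentry : ∀ i k, (u * monMk (K := K) (Equiv.swap 0 1) 1 (fun _ => one_norm) : U3 K) i k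
      = u i (Equiv.swap 0 1 k) := by
    intro i k
    rw [UnitaryGroup.mul_apply, Matrix.mul_apply, Finset.sum_eq_single (Equiv.swap 0 1 k)]
    · rw [monMk_entry, if_pos rfl, Pi.one_apply, mul_one]
    · intro j _ hj
      rw [monMk_entry, if_neg hj, mul_zero]
    · simp
  refine ⟨u * monMk (Equiv.swap 0 1) 1 (fun _ => one_norm), ?_,
    conjMon_mul_of_mem u (monMk_mem _ _ _), ?_⟩
  · intro i
    rw [hentry, hentry, Equiv.swap_apply_left, Equiv.swap_apply_right, add_comm]
    exact hu i
  · intro i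
    rw [hentry, Equiv.swap_apply_left]

/-- An involution of the unitary group normalises exactly `q ^ 3 / 2` triangles. The first vectors
of the corresponding normalised hermitian bases are the `q ^ 3` vectors of `card_unit`, and two of
them belong to each triangle. -/
theorem card_conjMon_mem (h : HermField K q) {s : U3 K} (hs : s * s = 1) (hs1 : s ≠ 1) :
    Nat.card {L : Subgroup (U3 K) // (∃ u, L = conjMon u) ∧ s ∈ L} = q ^ 3 / 2 := by
  obtain ⟨e, he, hee, hse⟩ := exists_transvection h hs hs1
  let X := {v : Fin 3 → K // hm v v = 1 ∧ hm v e = 1}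
  let T := {L : Subgroup (U3 K) // (∃ u, L = conjMon u) ∧ s ∈ L}
  have hX : ∀ c : X, ∃ u : U3 K, Frame e u ∧ ∀ i, u i 0 = c.1 i :=
    fun c => exists_frame hee c.2.1 c.2.2
  choose u huF huc using hX
  let φ : X → T := fun c => ⟨conjMon (u c), ⟨u c, rfl⟩, mem_conjMon_of_frame hse (huF c)⟩
  have hφ : ∀ (v : U3 K) (hv : Frame e v) (c : X), (∀ i, v i 0 = c.1 i) →
      conjMon (u c) = conjMon v := by
    intro v hv c hvc
    have h0 : ∀ i, u c i 0 = v i 0 := fun i => by rw [huc, hvc]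
    refine conjMon_eq_of_col h0 fun i => ?_
    have h1 := (huF c i).trans (hv i).symm
    rw [h0] at h1
    exact add_left_cancel h1
  have hfib : ∀ L : T, Nat.card {c : X // φ c = L} = 2 := by
    rintro ⟨L, ⟨v₀, rfl⟩, hsL⟩
    obtain ⟨v, hv, hvL⟩ := exists_frame_of_mem he hee hse hsL
    obtain ⟨v', hv', hvL', hv0⟩ := hv.swap
    let c : X := ⟨fun i => v i 0, frame_col hv⟩
    let c' : X := ⟨fun i => v' i 0, frame_col hv'⟩
    have hne : c ≠ c' := by
      intro hcc
      apply he
      funext i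
      have h1 : v i 0 = v' i 0 := congrFun (congrArg Subtype.val hcc) i
      rw [← hv i, h1, hv0 i]
      exact CharTwo.add_self_eq_zero _
    have hset : {x : X | φ x = ⟨conjMon v₀, ⟨v₀, rfl⟩, hsL⟩} = {c, c'} := by
      ext x
      rw [Set.mem_ofPred_eq, Set.mem_insert_iff, Set.mem_singleton_iff, Subtype.ext_iff]
      change conjMon (u x) = conjMon v₀ ↔ _
      constructor
      · intro hx
        rcases frame_col_of_conjMon_eq h hv (huF x) (hvL.trans hx.symm) with h1 | h1
        · left
          refine Subtype.ext (funext fun i => ?_)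
          rw [← huc, h1]
        · right
          refine Subtype.ext (funext fun i => ?_)
          rw [← huc, h1]
          exact (hv0 i).symm
      · rintro (rfl | rfl)
        · rw [hφ v hv _ fun i => rfl, hvL]
        · rw [hφ v' hv' _ fun i => rfl, hvL', hvL]
    change Nat.card {x : X | φ x = ⟨conjMon v₀, ⟨v₀, rfl⟩, hsL⟩} = 2
    rw [hset, Nat.card_coe_set_eq, Set.ncard_pair hne]
  have hcard : Nat.card X = Nat.card T * 2 := by
    haveI : Fintype T := Fintype.ofFinite T
    rw [← Nat.card_congr (Equiv.sigmaFiberEquiv φ), Nat.card_sigma,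
      Finset.sum_congr rfl fun L _ => hfib L, Finset.sum_const, Finset.card_univ, smul_eq_mul,
      Nat.card_eq_fintype_card]
  have hX3 : Nat.card X = q ^ 3 := card_unit h he hee
  change Nat.card T = _
  omega

end Count

/-! ### Passage to the projective group -/

section Scalars

open Matrix

variable {K : Type*} [Field K] [StarRing K] [CharP K 2] [Finite K] {q : ℕ}

theorem isCoatom_conjMon (h : HermField K q) (u : U3 K) : IsCoatom (conjMon u) :=
  (OrderIso.isCoatom_iff (MulAut.conj u).mapSubgroup (Mon K)).2 (isCoatom_Mon h)

/-- The scalar matrix `c`. -/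
def scal (c : K) (hc : c * star c = 1) : U3 K := dg (fun _ => c) fun _ => hc

theorem scal_mul_entry (c : K) (hc : c * star c = 1) (g : U3 K) (i j : Fin 3) :
    (scal c hc * g) i j = c * g i j := by
  rw [scal, mul_entry, dg_entry, dg_entry, dg_entry]
  rcases fin_three i with rfl | rfl | rfl <;> simp

theorem mul_scal_entry (c : K) (hc : c * star c = 1) (g : U3 K) (i j : Fin 3) :
    (g * scal c hc) i j = c * g i j := by
  rw [scal, mul_entry, dg_entry, dg_entry, dg_entry]
  rcases fin_three j with rfl | rfl | rfl <;> simp [mul_comm]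

theorem scal_comm (c : K) (hc : c * star c = 1) (g : U3 K) : scal c hc * g = g * scal c hc := by
  ext i j
  rw [scal_mul_entry, mul_scal_entry]

theorem scal_entry (c : K) (hc : c * star c = 1) (i j : Fin 3) :
    scal c hc i j = if i = j then c else 0 := by
  rw [scal, dg_entry]

theorem scal_mul (c d : K) (hc hd hcd) : scal (K := K) c hc * scal d hd = scal (c * d) hcd := by
  ext i j
  rw [scal_mul_entry, scal_entry, scal_entry, mul_ite, mul_zero]

theorem scal_one (c : K) (hc : c * star c = 1) (h1 : c = 1) : scal c hc = 1 := by
  ext i j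
  rw [scal_entry, UnitaryGroup.one_apply, Matrix.one_apply, h1]

theorem det_scal_mul (c : K) (hc : c * star c = 1) (g : U3 K) :
    (scal c hc * g : U3 K).1.det = c ^ 3 * g.1.det := by
  have : (scal c hc * g : U3 K).1 = c • g.1 := by
    ext i j
    exact scal_mul_entry c hc g i j
  rw [this, det_smul, Fintype.card_fin]

theorem scal_mem_conjMon (c : K) (hc : c * star c = 1) (u : U3 K) : scal c hc ∈ conjMon u := by
  rw [mem_conjMon, mul_assoc, scal_comm, ← mul_assoc, inv_mul_cancel, one_mul]
  exact dg_mem_Mon _ _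

/-- The centre of the unitary group consists of the scalars. -/
theorem exists_scal (h : HermField K q) {g : U3 K} (hg : ∀ u, g * u = u * g) :
    ∃ c hc, g = scal c hc := by
  obtain ⟨r, hr, hrd⟩ := exists_prime h
  obtain ⟨t, htr, ht1, ht⟩ := h.exists_order hr hrd
  have hoff : ∀ i j, i ≠ j → g i j = 0 := by
    intro i j hij
    have h1 := congrArg (fun m : U3 K => m i j) (hg (dg (Function.update 1 i t) (update_norm i ht)))
    have h2 : (g * dg (Function.update 1 i t) (update_norm i ht)) i j = g i j := by
      rw [mul_entry, dg_entry, dg_entry, dg_entry]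
      rcases fin_three j with rfl | rfl | rfl <;> simp [Function.update_of_ne (Ne.symm hij)]
    have h3 : (dg (Function.update 1 i t) (update_norm i ht) * g) i j = t * g i j := by
      rw [mul_entry, dg_entry, dg_entry, dg_entry]
      rcases fin_three i with rfl | rfl | rfl <;> simp
    have h4 : g i j = t * g i j := h2.symm.trans (h1.trans h3)
    have h5 : (t - 1) * g i j = 0 := by linear_combination -h4
    exact (mul_eq_zero.1 h5).resolve_left (sub_ne_zero.2 ht1)
  have hdiag : ∀ i, g i i = g 0 0 := by
    intro i
    have h1 := congrArg (fun m : U3 K => m i 0)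
      (hg (monMk (Equiv.swap 0 i) 1 fun _ => one_norm))
    have h2 : (g * (monMk (Equiv.swap 0 i) 1 fun _ => one_norm : U3 K)) i 0 = g i i := by
      rw [UnitaryGroup.mul_apply, Matrix.mul_apply, Finset.sum_eq_single i]
      · rw [monMk_entry, if_pos (Equiv.swap_apply_left _ _).symm, Pi.one_apply, mul_one]
      · intro j _ hj
        rw [hoff i j hj.symm, zero_mul]
      · simp
    have h3 : ((monMk (Equiv.swap 0 i) 1 fun _ => one_norm : U3 K) * g) i 0 = g 0 0 := by
      rw [UnitaryGroup.mul_apply, Matrix.mul_apply, Finset.sum_eq_single 0]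
      · rw [monMk_entry, if_pos (Equiv.swap_apply_left _ _).symm, Pi.one_apply, one_mul]
      · intro j _ hj
        rw [hoff j 0 hj, mul_zero]
      · simp
    exact h2.symm.trans (h1.trans h3)
  have hc : g 0 0 * star (g 0 0) = 1 := by
    have h1 := row_inner g 0 0
    rw [if_pos rfl, Fin.sum_univ_three, hoff 0 1 (by decide), hoff 0 2 (by decide)] at h1
    simpa using h1
  refine ⟨g 0 0, hc, ?_⟩
  ext i j
  rw [scal_entry]
  by_cases hij : i = j
  · rw [if_pos hij, ← hij, hdiag]
  · rw [if_neg hij, hoff i j hij]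

theorem det_norm (g : U3 K) : g.1.det * star g.1.det = 1 := by
  have h1 := (mem_unitaryGroup_iff).1 g.2
  have h2 := congrArg Matrix.det h1
  rw [det_mul, star_eq_conjTranspose, det_conjTranspose, det_one] at h2
  exact h2

theorem norm_pow_one {c : K} (hc : c * star c = 1) (k : ℕ) : c ^ k * star (c ^ k) = 1 := by
  rw [star_pow, ← mul_pow, hc, one_pow]

/-- Every element of norm one is the square of an element of norm one, as `q + 1` is odd. -/
theorem exists_sqrt (h : HermField K q) {c : K} (hc : c * star c = 1) :
    ∃ d, d * star d = 1 ∧ d * d = c := by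
  refine ⟨c ^ ((q + 2) / 2), norm_pow_one hc _, ?_⟩
  have h1 : (q + 2) / 2 + (q + 2) / 2 = (q + 1) + 1 := by
    have := h.even
    omega
  rw [← pow_add, h1, pow_succ, ← h.norm_eq_pow, hc, one_mul]

/-- For `c` of norm one the power `(q + 2) / 3` of `star c` is a cube root of `c⁻¹`, as
`q + 2` is congruent to `1` modulo `q + 1`. -/
theorem star_pow_cube (h : HermField K q) {c : K} (hc : c * star c = 1) :
    (star c ^ ((q + 2) / 3)) ^ 3 * c = 1 := by
  have h1 : (q + 2) / 3 * 3 = (q + 1) + 1 := by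
    have := h.mod_three
    omega
  have h2 := norm_star_one hc
  rw [← pow_mul, h1, pow_succ, ← h.norm_eq_pow, h2, one_mul, mul_comm, hc]

end Scalars

section Quotient

open Matrix

theorem hermField (n : ℕ) (hn : 1 ≤ n) : HermField (Fq2 n) (qval n) where
  card := by
    rw [GaloisField.card 2 (2 ^ (n + 1)) (by positivity), qval, ← pow_mul, pow_succ]
  star_eq _ := rfl
  four_le := by
    have h1 : 2 ^ 1 ≤ 2 ^ n := Nat.pow_le_pow_right (by norm_num) hn
    calc 4 = 2 ^ (2 ^ 1) := by norm_num
      _ ≤ 2 ^ 2 ^ n := Nat.pow_le_pow_right (by norm_num) h1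
  even := by
    have : 2 ∣ 2 ^ 2 ^ n := dvd_pow_self 2 (by positivity)
    exact Nat.mod_eq_zero_of_dvd this
  mod_three := by
    obtain ⟨m, rfl⟩ : ∃ m, n = m + 1 := ⟨n - 1, by omega⟩
    rw [qval, pow_succ, mul_comm, pow_mul, Nat.pow_mod]
    norm_num

variable {n : ℕ}

/-- The retraction of the unitary group onto the special unitary group, which exists because
cubing is bijective on the scalars. -/
noncomputable def toSU (hn : 1 ≤ n) : U3 (Fq2 n) →* SU3 n where
  toFun g := ⟨scal (star g.1.det ^ ((qval n + 2) / 3))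
      (norm_pow_one (norm_star_one (det_norm g)) _) * g, by
    change Matrix.det _ = 1
    rw [det_scal_mul, star_pow_cube (hermField n hn) (det_norm g)]⟩
  map_one' := by
    refine Subtype.ext ?_
    change _ * (1 : U3 (Fq2 n)) = 1
    rw [mul_one]
    exact scal_one _ _ (by simp)
  map_mul' a b := by
    refine Subtype.ext ?_
    have hx := norm_pow_one (norm_star_one (det_norm a)) ((qval n + 2) / 3)
    have hy := norm_pow_one (norm_star_one (det_norm b)) ((qval n + 2) / 3)
    have hz := norm_pow_one (norm_star_one (det_norm (a * b))) ((qval n + 2) / 3)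
    change scal _ hz * (a * b) = scal _ hx * a * (scal _ hy * b)
    have h1 : scal _ hz = scal _ hx * scal _ hy := by
      rw [scal_mul _ _ _ _ (norm_mul_one hx hy)]
      congr 1
      rw [UnitaryGroup.mul_val, det_mul, star_mul, mul_pow, mul_comm]
    rw [h1, mul_assoc, mul_assoc, ← mul_assoc a, ← scal_comm _ hy a, mul_assoc]

theorem toSU_coe (hn : 1 ≤ n) (g : U3 (Fq2 n)) : ∃ c hc, (toSU hn g : U3 (Fq2 n)) = scal c hc * g :=
  ⟨_, _, rfl⟩

theorem toSU_self (hn : 1 ≤ n) (g : SU3 n) : toSU hn g = g := by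
  refine Subtype.ext ?_
  have h1 : g.1.1.det = 1 := g.2
  change scal _ _ * g.1 = g.1
  rw [scal_one _ _ (by rw [h1, star_one, one_pow]), one_mul]

/-- The quotient map from the unitary group onto the projective special unitary group. -/
noncomputable def toPSU (hn : 1 ≤ n) : U3 (Fq2 n) →* PSU3 n :=
  (QuotientGroup.mk' (Subgroup.center (SU3 n))).comp (toSU hn)

theorem toPSU_surjective (hn : 1 ≤ n) : Function.Surjective (toPSU hn) := by
  intro x
  obtain ⟨g, rfl⟩ := QuotientGroup.mk'_surjective _ x
  exact ⟨g, congrArg _ (toSU_self hn g)⟩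

theorem mem_ker_toPSU (hn : 1 ≤ n) (g : U3 (Fq2 n)) :
    g ∈ (toPSU hn).ker ↔ ∃ c hc, g = scal c hc := by
  rw [MonoidHom.mem_ker, toPSU, MonoidHom.comp_apply, QuotientGroup.mk'_apply,
    QuotientGroup.eq_one_iff, Subgroup.mem_center_iff]
  constructor
  · intro hc
    refine exists_scal (hermField n hn) fun u => ?_
    obtain ⟨a, ha, hga⟩ := toSU_coe hn g
    obtain ⟨b, hb, hub⟩ := toSU_coe hn u
    have h1 := congrArg Subtype.val (hc (toSU hn u))
    rw [Subgroup.coe_mul, Subgroup.coe_mul, hga, hub] at h1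
    have h2 : scal a ha * (scal b hb * (u * g)) = scal a ha * (scal b hb * (g * u)) := by
      calc scal a ha * (scal b hb * (u * g)) = scal b hb * u * (scal a ha * g) := by
            rw [← mul_assoc, ← mul_assoc, scal_comm a ha (scal b hb), mul_assoc (scal b hb),
              scal_comm a ha u]
            group
        _ = scal a ha * g * (scal b hb * u) := h1
        _ = scal a ha * (scal b hb * (g * u)) := by
            rw [mul_assoc, ← mul_assoc g, ← scal_comm b hb g, mul_assoc]
    exact (mul_left_cancel (mul_left_cancel h2)).symm
  · rintro ⟨c, hc, rfl⟩ x
    obtain ⟨a, ha, hga⟩ := toSU_coe hn (scal c hc)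
    refine Subtype.ext ?_
    rw [Subgroup.coe_mul, Subgroup.coe_mul, hga, mul_assoc, scal_comm c hc, ← mul_assoc,
      ← scal_comm a ha, mul_assoc]

theorem card_ker_toPSU (hn : 1 ≤ n) : Nat.card (toPSU hn).ker = qval n + 1 := by
  rw [← (hermField n hn).card_norm_one]
  refine (Nat.card_congr (Equiv.ofBijective (fun x : {x : Fq2 n // x * star x = 1} =>
    (⟨scal x.1 x.2, (mem_ker_toPSU hn _).2 ⟨_, _, rfl⟩⟩ : (toPSU hn).ker)) ⟨?_, ?_⟩)).symm
  · rintro ⟨x, hx⟩ ⟨y, hy⟩ hxy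
    have h1 : scal x hx = scal y hy := congrArg Subtype.val hxy
    have h2 := congrArg (fun m : U3 (Fq2 n) => m 0 0) h1
    simp only [scal_entry, if_pos] at h2
    exact Subtype.ext h2
  · rintro ⟨g, hg⟩
    obtain ⟨c, hc, rfl⟩ := (mem_ker_toPSU hn g).1 hg
    exact ⟨⟨c, hc⟩, rfl⟩

theorem card_comap_toPSU (hn : 1 ≤ n) (M : Subgroup (PSU3 n)) :
    Nat.card (M.comap (toPSU hn)) = Nat.card M * (qval n + 1) := by
  have h1 := (M.comap (toPSU hn)).card_mul_index
  have h2 := (toPSU hn).ker.card_mul_index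
  have h3 := M.card_mul_index
  rw [Subgroup.index_comap_of_surjective M (toPSU_surjective hn)] at h1
  rw [Subgroup.index_ker, MonoidHom.range_eq_top.2 (toPSU_surjective hn), Subgroup.card_top,
    card_ker_toPSU, ← h3, ← h1] at h2
  have h4 : 0 < M.index := Nat.pos_of_ne_zero Subgroup.index_ne_zero_of_finite
  refine Nat.eq_of_mul_eq_mul_right h4 ?_
  rw [← h2]
  ring

theorem ker_le_conjMon (hn : 1 ≤ n) (u : U3 (Fq2 n)) : (toPSU hn).ker ≤ conjMon u := by
  intro g hg
  obtain ⟨c, hc, rfl⟩ := (mem_ker_toPSU hn g).1 hg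
  exact scal_mem_conjMon c hc u

/-- An involution of the projective group is the image of an involution of the unitary group. -/
theorem exists_involution (hn : 1 ≤ n) (σ : PSU3 n) (hσ : orderOf σ = 2) :
    ∃ s, toPSU hn s = σ ∧ s * s = 1 ∧ s ≠ 1 := by
  have hσ2 : σ * σ = 1 := by
    have h1 := pow_orderOf_eq_one σ
    rwa [hσ, pow_two] at h1
  have hσ1 : σ ≠ 1 := by
    rintro rfl
    rw [orderOf_one] at hσ
    exact absurd hσ (by decide)
  obtain ⟨g, hg⟩ := toPSU_surjective hn σ
  obtain ⟨c, hc, hgc⟩ := (mem_ker_toPSU hn (g * g)).1 (by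
    rw [MonoidHom.mem_ker, map_mul, hg, hσ2])
  obtain ⟨d, hd, hdc⟩ := exists_sqrt (hermField n hn) (norm_star_one hc)
  have hs : toPSU hn (scal d hd * g) = σ := by
    rw [map_mul, hg, MonoidHom.mem_ker.1 ((mem_ker_toPSU hn _).2 ⟨d, hd, rfl⟩), one_mul]
  refine ⟨scal d hd * g, hs, ?_, ?_⟩
  · calc scal d hd * g * (scal d hd * g) = scal d hd * scal d hd * (g * g) := by
          rw [mul_assoc, ← mul_assoc g, ← scal_comm d hd g]
          group
      _ = 1 := by
          rw [hgc, scal_mul d d hd hd (norm_mul_one hd hd),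
            scal_mul _ _ _ _ (norm_mul_one (norm_mul_one hd hd) hc)]
          exact scal_one _ _ (by rw [hdc, mul_comm, hc])
  · intro h1
    rw [h1, map_one] at hs
    exact hσ1 hs.symm

end Quotient

theorem stmt12 (n : ℕ) (hn : 1 ≤ n) (σ : PSU3 n) (hσ : orderOf σ = 2) :
    Nat.card {M : Subgroup (PSU3 n) //
      IsCoatom M ∧ Nat.card M = 6 * (qval n + 1) ^ 2 ∧ σ ∈ M} = qval n ^ 3 / 2 := by
  have h := hermField n hn
  obtain ⟨s, rfl, hs, hs1⟩ := exists_involution hn σ hσ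
  have hsurj := toPSU_surjective hn
  have hcomap : ∀ u, ((conjMon u).map (toPSU hn)).comap (toPSU hn) = conjMon u :=
    fun u => Subgroup.comap_map_eq_self (ker_le_conjMon hn u)
  rw [← card_conjMon_mem h hs hs1]
  refine Nat.card_congr
    { toFun := fun M => ⟨M.1.comap (toPSU hn), ?_, M.2.2.2⟩
      invFun := fun L => ⟨L.1.map (toPSU hn), ?_, ?_, Subgroup.mem_map_of_mem _ L.2.2⟩
      left_inv := fun M => Subtype.ext (Subgroup.map_comap_eq_self_of_surjective hsurj M.1)
      right_inv := ?_ }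
  · refine exists_eq_conjMon h _ ?_
    rw [card_comap_toPSU, M.2.2.1, card_Mon h]
    ring
  · obtain ⟨L, ⟨u, rfl⟩, hL⟩ := L
    have h1 := isCoatom_conjMon h u
    constructor
    · intro htop
      apply h1.1
      rw [← hcomap, htop, Subgroup.comap_top]
    · intro M hM
      have h2 : conjMon u < M.comap (toPSU hn) := by
        rw [← hcomap]
        exact (Subgroup.comap_lt_comap_of_surjective hsurj).2 hM
      rw [← Subgroup.map_comap_eq_self_of_surjective hsurj M, h1.2 _ h2,
        Subgroup.map_top_of_surjective _ hsurj]
  · obtain ⟨L, ⟨u, rfl⟩, hL⟩ := L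
    have h1 := card_comap_toPSU hn ((conjMon u).map (toPSU hn))
    rw [hcomap, card_conjMon, card_Mon h] at h1
    refine Nat.eq_of_mul_eq_mul_right (Nat.succ_pos (qval n)) ?_
    rw [← Nat.add_one, ← h1]
    ring
  · rintro ⟨L, ⟨u, rfl⟩, hL⟩
    exact Subtype.ext (hcomap u)

end PSUPaper
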